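/- Let G be a connected graph on n vertices in which every vertex has even degree and whose maximum degree is bounded by a constant Δ, and suppose G is ℓ-good. Then there is a constant B (depending only on Δ) such that for every rule A, the E-process on G has vertex cover time at most B·(n + n·log n/(ℓ·(1−λmax))), where λmax is the eigenvalue parameter of the (lazy) simple random walk on G. -/

import Mathlib

open scoped ENNReal Classical

-- `lambdaMax P` : the largest absolute value of an eigenvalue of `P` other than the
-- eigenvalue `1` (for an ergodic chain on a connected graph, `max(|λ₂|,…,|λₙ|)`).
noncomputable def lambdaMax {V : Type*} [Fintype V] [DecidableEq V] (P : Matrix V V ℝ) : ℝ :=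
  sSup {x : ℝ | ∃ μ ∈ spectrum ℝ P, μ ≠ 1 ∧ x = |μ|}

-- Transition matrix of the lazy simple random walk on `G`.
noncomputable def lazyMatrix {V : Type*} [Fintype V] [DecidableEq V] (G : SimpleGraph V) :
    Matrix V V ℝ :=
  Matrix.of fun u v =>
    (if u = v then (1 : ℝ) / 2 else 0) +
      (if G.Adj u v then 1 / (2 * ((G.neighborSet u).ncard : ℝ)) else 0)

-- The edges traversed by a history `h = [Xₜ, Xₜ₋₁, …, X₀]` (most recent vertex first).
def trav {V : Type*} (h : List V) : List (Sym2 V) :=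
  (h.zip h.tail).map fun p => s(p.1, p.2)

-- One-step transition probabilities of the E-process with edge-selection rule `A`:
-- given the history `v :: h` (current vertex `v`), if some edge of `G` incident with `v`
-- is untraversed, move (deterministically) to the vertex chosen by the rule `A`;
-- otherwise move to a uniformly random neighbour of `v`.
noncomputable def eStep {V : Type*} [Fintype V] (G : SimpleGraph V) (A : List V → V) :
    List V → V → ℝ
  | [], _ => 0
  | (v :: h), x =>
      if ∃ y : V, G.Adj v y ∧ s(v, y) ∉ trav (v :: h) then
        (if x = A (v :: h) then 1 else 0)
      else if G.Adj v x then 1 / ((G.neighborSet v).ncard : ℝ) else 0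

-- A rule is valid if, whenever the current vertex has an untraversed incident edge, it
-- selects a neighbour along such an untraversed edge (its choice may depend arbitrarily,
-- even adversarially, on the entire history).
def ValidRule {V : Type*} (G : SimpleGraph V) (A : List V → V) : Prop :=
  ∀ (v : V) (h : List V), (∃ y : V, G.Adj v y ∧ s(v, y) ∉ trav (v :: h)) →
    G.Adj v (A (v :: h)) ∧ s(v, A (v :: h)) ∉ trav (v :: h)

-- Probability that the E-process started at `u` produces the history `h`
-- (listed most recent vertex first, so the last entry of `h` must be `u`).
noncomputable def trajProb {V : Type*} [Fintype V] (G : SimpleGraph V) (A : List V → V)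
    (u : V) : List V → ℝ
  | [] => 0
  | [x] => if x = u then 1 else 0
  | (x :: y :: h) => eStep G A (y :: h) x * trajProb G A u (y :: h)

-- `uncovProb G A u t` : the probability that the E-process started at `u` has NOT visited
-- every vertex of `G` during steps `0, 1, …, t`.
noncomputable def uncovProb {V : Type*} [Fintype V] (G : SimpleGraph V) (A : List V → V)
    (u : V) (t : ℕ) : ℝ :=
  ∑ f : Fin (t + 1) → V,
    if ∀ x : V, ∃ i, f i = x then 0 else trajProb G A u (List.ofFn f)

-- Expected vertex cover time of the E-process started at `u`,
-- computed as `∑_{t ≥ 0} Pr(cover time > t)`.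
noncomputable def ecoverTime {V : Type*} [Fintype V] (G : SimpleGraph V) (A : List V → V)
    (u : V) : ℝ≥0∞ :=
  ∑' t : ℕ, ENNReal.ofReal (uncovProb G A u t)

-- `G` is `ℓ`-good: for every vertex `v`, every nonempty subgraph of `G` in which every
-- vertex has even degree and which contains all edges of `G` incident with `v` has at
-- least `ℓ` vertices.
def EvenSubgraphGood {V : Type*} [Fintype V] (G : SimpleGraph V) (ℓ : ℕ) : Prop :=
  ∀ (v : V) (H : G.Subgraph), H.verts.Nonempty →
    (∀ e ∈ G.edgeSet, v ∈ e → e ∈ H.edgeSet) →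
    (∀ x : V, Even ((H.neighborSet x).ncard)) →
    ℓ ≤ H.verts.ncard

set_option linter.unusedSectionVars false

set_option linter.unusedSectionVars false

section Basic
variable {V : Type} [Fintype V] [DecidableEq V]

/-- Neighbours as a finset. -/
noncomputable def nb (G : SimpleGraph V) (x : V) : Finset V := Finset.univ.filter (fun y => G.Adj x y)

/-- Degree. -/
noncomputable def dg (G : SimpleGraph V) (x : V) : ℕ := (nb G x).card

theorem mem_nb {G : SimpleGraph V} {x y : V} : y ∈ nb G x ↔ G.Adj x y := by
  simp [nb]

theorem ncard_eq_dg (G : SimpleGraph V) (x : V) : (G.neighborSet x).ncard = dg G x := by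
  rw [dg, ← Set.ncard_coe_finset]
  congr 1
  ext y
  simp [nb]

theorem nb_sum_swap (G : SimpleGraph V) (F : V → V → ℝ) :
    ∑ x, ∑ y ∈ nb G x, F x y = ∑ x, ∑ y ∈ nb G x, F y x := by
  simp only [nb, Finset.sum_filter]
  rw [Finset.sum_comm]
  simp only [G.adj_comm]

theorem nb_sum_const (G : SimpleGraph V) (f : V → ℝ) :
    ∑ x, ∑ _y ∈ nb G x, f x = ∑ x, (dg G x : ℝ) * f x := by
  simp [dg]

/-- Dirichlet form over ordered pairs. -/
noncomputable def En (G : SimpleGraph V) (f : V → ℝ) : ℝ := ∑ x, ∑ y ∈ nb G x, (f x - f y) ^ 2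

theorem En_nonneg (G : SimpleGraph V) (f : V → ℝ) : 0 ≤ En G f :=
  Finset.sum_nonneg fun _ _ => Finset.sum_nonneg fun _ _ => sq_nonneg _

theorem En_eq (G : SimpleGraph V) (f : V → ℝ) :
    En G f = 2 * ∑ x, (dg G x : ℝ) * f x ^ 2 - 2 * ∑ x, ∑ y ∈ nb G x, f x * f y := by
  have h1 : En G f = ∑ x, ∑ y ∈ nb G x, f x ^ 2 + ∑ x, ∑ y ∈ nb G x, f y ^ 2
      - 2 * ∑ x, ∑ y ∈ nb G x, f x * f y := by
    rw [En, Finset.mul_sum, ← Finset.sum_add_distrib, ← Finset.sum_sub_distrib]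
    refine Finset.sum_congr rfl fun x _ => ?_
    rw [Finset.mul_sum, ← Finset.sum_add_distrib, ← Finset.sum_sub_distrib]
    refine Finset.sum_congr rfl fun y _ => ?_
    ring
  rw [h1, nb_sum_swap G (fun x y => f y ^ 2), nb_sum_const G (fun x => f x ^ 2)]
  ring

theorem En_le (G : SimpleGraph V) (f : V → ℝ) :
    En G f ≤ 4 * ∑ x, (dg G x : ℝ) * f x ^ 2 := by
  have h1 : En G f ≤ ∑ x, ∑ y ∈ nb G x, (2 * f x ^ 2) + ∑ x, ∑ y ∈ nb G x, (2 * f y ^ 2) := by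
    rw [En, ← Finset.sum_add_distrib]
    refine Finset.sum_le_sum fun x _ => ?_
    rw [← Finset.sum_add_distrib]
    refine Finset.sum_le_sum fun y _ => ?_
    nlinarith [sq_nonneg (f x + f y)]
  rw [nb_sum_swap G (fun x y => 2 * f y ^ 2), nb_sum_const G (fun x => 2 * f x ^ 2)] at h1
  refine h1.trans (le_of_eq ?_)
  rw [← Finset.sum_add_distrib, Finset.mul_sum]
  exact Finset.sum_congr rfl fun x _ => by ring

theorem En_zero_const {G : SimpleGraph V} (hc : G.Connected) {f : V → ℝ} (h : En G f = 0)
    (x y : V) : f x = f y := by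
  have hadj : ∀ a b, G.Adj a b → f a = f b := by
    intro a b hab
    rw [En, Finset.sum_eq_zero_iff_of_nonneg
      (fun _ _ => Finset.sum_nonneg fun _ _ => sq_nonneg _)] at h
    have h2 := h a (Finset.mem_univ _)
    rw [Finset.sum_eq_zero_iff_of_nonneg (fun _ _ => sq_nonneg _)] at h2
    have h3 := h2 b (mem_nb.2 hab)
    have := pow_eq_zero_iff (two_ne_zero) |>.1 h3
    linarith
  obtain ⟨w⟩ := hc.preconnected x y
  induction w with
  | nil => rfl
  | cons hab _ ih => exact (hadj _ _ hab).trans ih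

end Basic

section Poincare
variable {V : Type} [Fintype V] [DecidableEq V]

theorem lazy_mulVec (G : SimpleGraph V) (f : V → ℝ) (x : V) (hd : 0 < dg G x) :
    (dg G x : ℝ) * (lazyMatrix G).mulVec f x =
      (dg G x : ℝ) * f x / 2 + (∑ y ∈ nb G x, f y) / 2 := by
  have hd' : (dg G x : ℝ) ≠ 0 := by exact_mod_cast hd.ne'
  have : (lazyMatrix G).mulVec f x = f x / 2 + ∑ y ∈ nb G x, (1 / (2 * (dg G x : ℝ))) * f y := by
    simp only [Matrix.mulVec, dotProduct, lazyMatrix, Matrix.of_apply, add_mul,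
      Finset.sum_add_distrib, ncard_eq_dg]
    congr 1
    · simp [ite_mul]; ring
    · simp [nb, Finset.sum_filter, ite_mul]
  rw [this, ← Finset.mul_sum]
  field_simp

theorem mem_spec_iff (P : Matrix V V ℝ) (μ : ℝ) :
    μ ∈ spectrum ℝ P ↔ ∃ f : V → ℝ, f ≠ 0 ∧ P.mulVec f = μ • f := by
  rw [← Matrix.spectrum_toLin', ← Module.End.hasEigenvalue_iff_mem_spectrum]
  constructor
  · intro h
    obtain ⟨f, hf⟩ := h.exists_hasEigenvector
    exact ⟨f, hf.2, by simpa using hf.apply_eq_smul⟩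
  · rintro ⟨f, hf, he⟩
    exact Module.End.hasEigenvalue_of_hasEigenvector
      (x := f) ⟨Module.End.mem_eigenspace_iff.2 (by simpa using he), hf⟩

theorem eig_energy {G : SimpleGraph V} (hd : ∀ x, 0 < dg G x) {μ : ℝ} {f : V → ℝ}
    (h : (lazyMatrix G).mulVec f = μ • f) :
    En G f = 4 * (1 - μ) * ∑ x, (dg G x : ℝ) * f x ^ 2 := by
  have h1 : ∑ x, ∑ y ∈ nb G x, f x * f y = (2 * μ - 1) * ∑ x, (dg G x : ℝ) * f x ^ 2 := by
    rw [Finset.mul_sum]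
    refine Finset.sum_congr rfl fun x _ => ?_
    have h2 := lazy_mulVec G f x (hd x)
    rw [h] at h2
    simp only [Pi.smul_apply, smul_eq_mul] at h2
    rw [← Finset.mul_sum]
    have : ∑ y ∈ nb G x, f y = (2 * μ - 1) * (dg G x * f x) := by linarith
    rw [this]; ring
  rw [En_eq, h1]; ring

theorem dsum_pos {G : SimpleGraph V} (hd : ∀ x, 0 < dg G x) {f : V → ℝ} (hf : f ≠ 0) :
    0 < ∑ x, (dg G x : ℝ) * f x ^ 2 := by
  obtain ⟨x, hx⟩ := Function.ne_iff.1 hf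
  refine Finset.sum_pos' (fun _ _ => by positivity) ⟨x, Finset.mem_univ _, ?_⟩
  have := hd x
  have : f x ≠ 0 := hx
  positivity

theorem spec_mem {G : SimpleGraph V} (hd : ∀ x, 0 < dg G x) {μ : ℝ}
    (h : μ ∈ spectrum ℝ (lazyMatrix G)) : 0 ≤ μ ∧ μ ≤ 1 := by
  obtain ⟨f, hf, he⟩ := (mem_spec_iff _ _).1 h
  have h1 := eig_energy hd he
  have h2 := dsum_pos hd hf
  have h3 := En_le G f
  have h4 := En_nonneg G f
  constructor <;> by_contra hh <;> push Not at hh <;> nlinarith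

theorem lam_facts {G : SimpleGraph V} (hd : ∀ x, 0 < dg G x) :
    0 ≤ lambdaMax (lazyMatrix G) ∧ lambdaMax (lazyMatrix G) < 1 ∧
    ∀ μ ∈ spectrum ℝ (lazyMatrix G), μ ≠ 1 → μ ≤ lambdaMax (lazyMatrix G) := by
  have hfin : {x : ℝ | ∃ μ ∈ spectrum ℝ (lazyMatrix G), μ ≠ 1 ∧ x = |μ|}.Finite := by
    refine ((Matrix.finite_real_spectrum (A := lazyMatrix G)).image (fun μ => |μ|)).subset ?_
    rintro x ⟨μ, h, _, rfl⟩
    exact ⟨μ, h, rfl⟩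
  refine ⟨?_, ?_, ?_⟩
  · apply Real.sSup_nonneg
    rintro x ⟨μ, _, _, rfl⟩
    exact abs_nonneg _
  · rcases Set.eq_empty_or_nonempty
      {x : ℝ | ∃ μ ∈ spectrum ℝ (lazyMatrix G), μ ≠ 1 ∧ x = |μ|} with h | h
    · rw [lambdaMax, h]; simp
    · obtain ⟨μ, h1, h2, h3⟩ := h.csSup_mem hfin
      rw [lambdaMax, h3]
      have := spec_mem hd h1
      rw [abs_of_nonneg this.1]
      exact lt_of_le_of_ne this.2 h2
  · intro μ h1 h2
    have : |μ| ≤ lambdaMax (lazyMatrix G) := le_csSup hfin.bddAbove ⟨μ, h1, h2, rfl⟩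
    exact (le_abs_self _).trans this

theorem poincare {G : SimpleGraph V} (hc : G.Connected) (hd : ∀ x, 0 < dg G x) (f : V → ℝ)
    (hf : ∑ x, (dg G x : ℝ) * f x = 0) :
    (1 - lambdaMax (lazyMatrix G)) * ∑ x, (dg G x : ℝ) * f x ^ 2 ≤ En G f := by
  set s : V → ℝ := fun x => Real.sqrt (dg G x) with hs
  have hspos : ∀ x, 0 < s x := fun x => Real.sqrt_pos.2 (by exact_mod_cast hd x)
  have hsq : ∀ x, s x * s x = dg G x := fun x => Real.mul_self_sqrt (by positivity)
  set A : Matrix V V ℝ := Matrix.of fun x y => s x * lazyMatrix G x y / s y with hA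
  have hmv : ∀ (g : V → ℝ) x, A.mulVec (fun y => s y * g y) x = s x * (lazyMatrix G).mulVec g x := by
    intro g x
    simp only [Matrix.mulVec, dotProduct, hA, Matrix.of_apply, Finset.mul_sum]
    refine Finset.sum_congr rfl fun y _ => ?_
    have := (hspos y).ne'
    field_simp
  have hH : A.IsHermitian := by
    ext x y
    simp only [Matrix.conjTranspose_apply, hA, Matrix.of_apply, star_trivial, lazyMatrix,
      ncard_eq_dg]
    have h1 := (hspos x).ne'
    have h2 := (hspos y).ne'
    rw [← hsq x, ← hsq y]
    by_cases hxy : x = y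
    · subst hxy; rfl
    · have : ¬ y = x := fun h => hxy h.symm
      simp only [hxy, this, if_false, zero_add, G.adj_comm y x]
      split_ifs
      · field_simp
      · simp
  set b := hH.eigenvectorBasis with hb
  set μ := hH.eigenvalues with hμ
  -- eigenvectors of the lazy matrix
  have hbi : ∀ i, ∃ k : V → ℝ, (∀ x, b i x = s x * k x) ∧ (lazyMatrix G).mulVec k = μ i • k
      ∧ k ≠ 0 := by
    intro i
    refine ⟨fun x => b i x / s x, fun x => ?_, ?_, ?_⟩
    · have := (hspos x).ne'
      field_simp
    · ext x
      have h1 := hmv (fun x => b i x / s x) x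
      have h2 : (fun y => s y * (b i y / s y)) = (b i : V → ℝ) := by
        ext y
        have := (hspos y).ne'
        field_simp
      rw [h2] at h1
      have h3 := congrFun (hH.mulVec_eigenvectorBasis i) x
      rw [← hb] at h3
      rw [h3] at h1
      simp only [Pi.smul_apply, smul_eq_mul] at h1 ⊢
      have := (hspos x).ne'
      field_simp
      linarith
    · intro h0
      have : b i = 0 := by
        ext x
        have := congrFun h0 x
        have h5 := (hspos x).ne'
        simp only [Pi.zero_apply, div_eq_zero_iff, h5, or_false] at this
        simpa using this
      exact b.orthonormal.ne_zero i this
  have hlam := lam_facts hd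
  -- the vector
  set g : EuclideanSpace ℝ V := WithLp.toLp 2 (fun x => s x * f x) with hg
  set c : V → ℝ := fun i => inner ℝ (b i) g with hc'
  have hzero : ∀ i, μ i = 1 → c i = 0 := by
    intro i hi
    obtain ⟨k, hk, hke, hk0⟩ := hbi i
    have he := eig_energy hd hke
    rw [hi] at he
    have hconst := En_zero_const hc (by simpa using he : En G k = 0)
    simp only [hc', PiLp.inner_apply, hg]
    obtain ⟨x0⟩ := hc.nonempty
    have : ∀ x, inner ℝ (b i x) (s x * f x) = k x0 * (dg G x * f x) := by
      intro x
      rw [hk x, hconst x x0, ← hsq x]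
      simp
      ring
    simp only [this]
    rw [← Finset.mul_sum, hf, mul_zero]
  have hmem : ∀ i, μ i ∈ spectrum ℝ (lazyMatrix G) := by
    intro i
    obtain ⟨k, hk, hke, hk0⟩ := hbi i
    exact (mem_spec_iff _ _).2 ⟨k, hk0, hke⟩
  have hnorm : ∑ x, (dg G x : ℝ) * f x ^ 2 = ∑ i, c i ^ 2 := by
    have h1 := b.sum_inner_mul_inner g g
    have h2 : inner ℝ g g = ∑ x, (dg G x : ℝ) * f x ^ 2 := by
      simp only [PiLp.inner_apply, hg]
      refine Finset.sum_congr rfl fun x _ => ?_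
      rw [← hsq x]; simp; ring_nf; simp only [sq_abs]
    rw [← h2, ← h1]
    refine Finset.sum_congr rfl fun i _ => ?_
    rw [real_inner_comm, sq]
  have hquad : ∑ x, (s x * f x) * A.mulVec (fun y => s y * f y) x = ∑ i, μ i * c i ^ 2 := by
    set Ag : EuclideanSpace ℝ V := WithLp.toLp 2 (A.mulVec (fun y => s y * f y)) with hAg
    have h1 := b.sum_inner_mul_inner g Ag
    have h2 : inner ℝ g Ag = ∑ x, (s x * f x) * A.mulVec (fun y => s y * f y) x := by
      simp only [PiLp.inner_apply, hg, hAg]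
      refine Finset.sum_congr rfl fun x _ => ?_
      simp; ring
    have h3 : ∀ i, inner ℝ (b i) Ag = μ i * c i := by
      intro i
      have e1 : inner ℝ (b i) Ag = (b i : V → ℝ) ⬝ᵥ (A.mulVec (fun y => s y * f y)) := by
        simp only [PiLp.inner_apply, hAg, dotProduct]
        refine Finset.sum_congr rfl fun x _ => ?_
        simp; ring
      have e2 : c i = (b i : V → ℝ) ⬝ᵥ (fun y => s y * f y) := by
        simp only [hc', PiLp.inner_apply, hg, dotProduct]
        refine Finset.sum_congr rfl fun x _ => ?_
        simp; ring
      rw [e1, e2, Matrix.dotProduct_mulVec]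
      have e3 : Matrix.vecMul (b i : V → ℝ) A = μ i • (b i : V → ℝ) := by
        rw [← Matrix.mulVec_transpose]
        have : A.transpose = A := by
          rw [← Matrix.conjTranspose_eq_transpose_of_trivial]; exact hH
        rw [this]
        exact hH.mulVec_eigenvectorBasis i
      rw [e3, smul_dotProduct, smul_eq_mul]
    rw [← h2, ← h1]
    refine Finset.sum_congr rfl fun i _ => ?_
    rw [h3, real_inner_comm]; simp only [hc']; ring
  have hquad2 : ∑ x, (s x * f x) * A.mulVec (fun y => s y * f y) x
      = ∑ x, (dg G x : ℝ) * f x ^ 2 - En G f / 4 := by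
    have : ∀ x, (s x * f x) * A.mulVec (fun y => s y * f y) x =
        (dg G x : ℝ) * f x ^ 2 / 2 + (∑ y ∈ nb G x, f x * f y) / 2 := by
      intro x
      have h2 := lazy_mulVec G f x (hd x)
      rw [hmv, ← Finset.mul_sum]
      calc s x * f x * (s x * (lazyMatrix G).mulVec f x)
          = f x * ((s x * s x) * (lazyMatrix G).mulVec f x) := by ring
        _ = _ := by rw [hsq, h2]; ring
    simp only [this]
    rw [Finset.sum_add_distrib, ← Finset.sum_div, ← Finset.sum_div, En_eq]
    ring
  have hle : ∑ i, μ i * c i ^ 2 ≤ lambdaMax (lazyMatrix G) * ∑ i, c i ^ 2 := by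
    rw [Finset.mul_sum]
    refine Finset.sum_le_sum fun i _ => ?_
    by_cases hi : μ i = 1
    · rw [hzero i hi]; simp
    · exact mul_le_mul_of_nonneg_right (hlam.2.2 _ (hmem i) hi) (sq_nonneg _)
  rw [← hquad, hquad2, ← hnorm] at hle
  have := En_nonneg G f
  linarith

end Poincare

section EvenExt
variable {V : Type} [Fintype V] [DecidableEq V]

theorem zmod2_chain (K : V → V → Prop) (hs : ∀ a b, K a b → K b a) (hi : ∀ a, ¬ K a a) {r p : V}
    (h : Relation.ReflTransGen K r p) :
    ∃ c : V → V → ZMod 2, (∀ a b, c a b = c b a) ∧ (∀ a b, c a b ≠ 0 → K a b) ∧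
      ∀ a, ∑ b, c a b = (if a = r then 1 else 0) + (if a = p then 1 else 0) := by
  induction h with
  | refl =>
    refine ⟨fun _ _ => 0, fun _ _ => rfl, fun _ _ h => absurd rfl h, fun a => ?_⟩
    rw [CharTwo.add_self_eq_zero]; simp
  | @tail p q _ hpq ih =>
    obtain ⟨c, h1, h2, h3⟩ := ih
    have hne : p ≠ q := fun h => hi p (by rw [← h] at hpq; exact hpq)
    refine ⟨fun a b => c a b + ((if a = p ∧ b = q then 1 else 0) + (if a = q ∧ b = p then 1 else 0)),
      fun a b => ?_, fun a b hab => ?_, fun a => ?_⟩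
    · simp only
      rw [h1 a b, add_comm (if a = p ∧ b = q then (1 : ZMod 2) else 0)]
      simp only [and_comm]
    · by_contra hn
      apply hab
      have e1 : c a b = 0 := by
        by_contra h; exact hn (h2 a b h)
      have e2 : ¬ (a = p ∧ b = q) := by rintro ⟨rfl, rfl⟩; exact hn hpq
      have e3 : ¬ (a = q ∧ b = p) := by rintro ⟨rfl, rfl⟩; exact hn (hs _ _ hpq)
      simp [e1, e2, e3]
    · rw [Finset.sum_add_distrib, h3, Finset.sum_add_distrib]
      have e1 : ∑ b, (if a = p ∧ b = q then (1 : ZMod 2) else 0) = if a = p then 1 else 0 := by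
        by_cases h : a = p <;> simp [h]
      have e2 : ∑ b, (if a = q ∧ b = p then (1 : ZMod 2) else 0) = if a = q then 1 else 0 := by
        by_cases h : a = q <;> simp [h]
      rw [e1, e2]
      have e3 := CharTwo.add_self_eq_zero (if a = p then (1 : ZMod 2) else 0)
      linear_combination e3

theorem zmod2_ne_zero {a : ZMod 2} (h : a ≠ 0) : a = 1 := by
  revert a; decide

theorem even_ext {G : SimpleGraph V} {ℓ : ℕ} (hgood : EvenSubgraphGood G ℓ)
    (heven : ∀ x, Even (dg G x)) (X : Finset V) (x : V) (hx : x ∈ X)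
    (hn : ∀ y, G.Adj x y → y ∈ X) (r : V)
    (hr : ∀ y, G.Adj x y →
      Relation.ReflTransGen (fun a b => G.Adj a b ∧ a ∈ X ∧ b ∈ X ∧ a ≠ x ∧ b ≠ x) r y) :
    ℓ ≤ X.card := by
  set K : V → V → Prop := fun a b => G.Adj a b ∧ a ∈ X ∧ b ∈ X ∧ a ≠ x ∧ b ≠ x with hK
  have hKs : ∀ a b, K a b → K b a := fun a b h => ⟨h.1.symm, h.2.2.1, h.2.1, h.2.2.2.2, h.2.2.2.1⟩
  have hKi : ∀ a, ¬ K a a := fun a h => G.loopless.irrefl a h.1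
  have hch : ∀ p, ∃ c : V → V → ZMod 2, (∀ a b, c a b = c b a) ∧ (∀ a b, c a b ≠ 0 → K a b) ∧
      (G.Adj x p → ∀ a, ∑ b, c a b = (if a = r then 1 else 0) + (if a = p then 1 else 0)) := by
    intro p
    by_cases hp : G.Adj x p
    · obtain ⟨c, h1, h2, h3⟩ := zmod2_chain K hKs hKi (hr p hp)
      exact ⟨c, h1, h2, fun _ => h3⟩
    · exact ⟨fun _ _ => 0, fun _ _ => rfl, fun _ _ h => absurd rfl h, fun h => absurd h hp⟩
  choose c hc1 hc2 hc3 using hch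
  set C : V → V → ZMod 2 := fun a b => ∑ p ∈ nb G x, c p a b +
    ((if a = x ∧ G.Adj x b then 1 else 0) + (if b = x ∧ G.Adj x a then 1 else 0)) with hC
  have hCs : ∀ a b, C a b = C b a := by
    intro a b
    simp only [hC]
    rw [add_comm (if a = x ∧ G.Adj x b then (1 : ZMod 2) else 0)]
    congr 1
    exact Finset.sum_congr rfl fun p _ => hc1 p a b
  have hdeg : ((dg G x : ℕ) : ZMod 2) = 0 := by
    rw [ZMod.natCast_eq_zero_iff]; exact (heven x).two_dvd
  have hsum : ∀ a, ∑ b, C a b = 0 := by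
    intro a
    simp only [hC]
    rw [Finset.sum_add_distrib, Finset.sum_comm, Finset.sum_add_distrib]
    have e1 : ∑ p ∈ nb G x, ∑ b, c p a b =
        ∑ p ∈ nb G x, ((if a = r then (1 : ZMod 2) else 0) + (if a = p then 1 else 0)) :=
      Finset.sum_congr rfl fun p hp => hc3 p (mem_nb.1 hp) a
    have e2 : ∑ b, (if a = x ∧ G.Adj x b then (1 : ZMod 2) else 0) = 0 := by
      by_cases h : a = x
      · simp only [h, true_and]
        rw [Finset.sum_boole]
        exact hdeg
      · simp [h]
    have e3 : ∑ b, (if b = x ∧ G.Adj x a then (1 : ZMod 2) else 0) = if G.Adj x a then 1 else 0 := by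
      by_cases h : G.Adj x a <;> simp [h]
    have e4 : ∑ p ∈ nb G x, (if a = p then (1 : ZMod 2) else 0) = if G.Adj x a then 1 else 0 := by
      rw [Finset.sum_ite_eq]
      simp only [mem_nb]
    rw [e1, Finset.sum_add_distrib, e2, e3, e4, Finset.sum_const, nsmul_eq_mul]
    change ((dg G x : ℕ) : ZMod 2) * _ + _ + _ = _
    rw [hdeg]
    have e5 := CharTwo.add_self_eq_zero (if G.Adj x a then (1 : ZMod 2) else 0)
    linear_combination e5
  have hsub : ∀ a b, C a b ≠ 0 → G.Adj a b ∧ a ∈ X := by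
    intro a b hab
    by_cases h1 : ∃ p ∈ nb G x, c p a b ≠ 0
    · obtain ⟨p, _, hp⟩ := h1
      have := hc2 p a b hp
      exact ⟨this.1, this.2.1⟩
    · push Not at h1
      by_cases h2 : a = x ∧ G.Adj x b
      · rw [h2.1]; exact ⟨h2.2, hx⟩
      · by_cases h3 : b = x ∧ G.Adj x a
        · rw [h3.1]; exact ⟨h3.2.symm, hn a h3.2⟩
        · exfalso; apply hab
          simp only [hC, h2, h3, if_false, add_zero]
          exact Finset.sum_eq_zero h1
  let H : G.Subgraph :=
    { verts := (X : Set V)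
      Adj := fun a b => C a b ≠ 0
      adj_sub := fun {a b} h => (hsub a b h).1
      edge_vert := fun {a b} h => (hsub a b h).2
      symm := ⟨fun a b h => by rw [hCs]; exact h⟩ }
  have := hgood x H ⟨x, hx⟩ ?_ ?_
  · simpa [H] using this
  · intro e he hxe
    obtain ⟨b, rfl⟩ := hxe
    rw [SimpleGraph.mem_edgeSet] at he
    rw [SimpleGraph.Subgraph.mem_edgeSet]
    change C x b ≠ 0
    have e1 : ∀ p ∈ nb G x, c p x b = 0 := by
      intro p _
      by_contra h
      exact (hc2 p x b h).2.2.2.1 rfl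
    have hbx : ¬ b = x := fun h => G.loopless.irrefl x (by rw [h] at he; exact he)
    simp only [hC, Finset.sum_eq_zero e1, he, hbx]
    simp
  · intro a
    have e1 : (H.neighborSet a).ncard = (Finset.univ.filter (fun b => C a b ≠ 0)).card := by
      rw [← Set.ncard_coe_finset]
      congr 1
      ext b
      simp [H]
    rw [e1, ← ZMod.natCast_eq_zero_iff_even, Finset.card_filter, Nat.cast_sum]
    refine Eq.trans ?_ (hsum a)
    refine Finset.sum_congr rfl fun b _ => ?_
    by_cases h : C a b = 0
    · simp [h]
    · simp [zmod2_ne_zero h]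

end EvenExt

section Iso

theorem rtg_first {U : Type} {R : U → U → Prop} {x z : U} (h : Relation.ReflTransGen R x z)
    (hne : x ≠ z) : ∃ p, R x p ∧ Relation.ReflTransGen (fun a b => R a b ∧ a ≠ x ∧ b ≠ x) p z := by
  induction h with
  | refl => exact absurd rfl hne
  | @tail y z _ hyz ih =>
    by_cases hy : x = y
    · subst hy; exact ⟨z, hyz, Relation.ReflTransGen.refl⟩
    · obtain ⟨p, hp, hr⟩ := ih hy
      exact ⟨p, hp, hr.tail ⟨hyz, Ne.symm hy, Ne.symm hne⟩⟩

theorem rtg_symm {U : Type} {R : U → U → Prop} (hs : ∀ a b, R a b → R b a) {x z : U}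
    (h : Relation.ReflTransGen R x z) : Relation.ReflTransGen R z x := by
  induction h with
  | refl => exact Relation.ReflTransGen.refl
  | tail _ hyz ih => exact Relation.ReflTransGen.head (hs _ _ hyz) ih

variable {U : Type} [Fintype U] [DecidableEq U]

theorem dg_eq_degree (F : SimpleGraph U) [DecidableRel F.Adj] (x : U) : dg F x = F.degree x := by
  rw [dg, ← SimpleGraph.card_neighborFinset_eq_degree]
  congr 1
  ext y
  simp [nb]

theorem forest_sum (F : SimpleGraph U) (hF : F.IsAcyclic) : ∑ x, dg F x ≤ 2 * Fintype.card U := by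
  rcases isEmpty_or_nonempty U with h | h
  · simp
  · obtain ⟨T, hFT, _, hT⟩ := SimpleGraph.Connected.exists_isTree_le_of_le_of_isAcyclic
      (G := (⊤ : SimpleGraph U)) (H := F) (SimpleGraph.connected_top) le_top hF
    have h1 : ∑ x, dg F x ≤ ∑ x, dg T x := by
      refine Finset.sum_le_sum fun x _ => Finset.card_le_card fun y hy => ?_
      rw [mem_nb] at *
      exact hFT hy
    have h2 : ∑ x, dg T x = 2 * T.edgeFinset.card := by
      rw [← SimpleGraph.sum_degrees_eq_twice_card_edges]
      exact Finset.sum_congr rfl fun x _ => dg_eq_degree T x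
    have h3 := hT.card_edgeFinset
    omega

theorem abstract_iso (Γ : SimpleGraph U) (Bd : Finset U) (Δ : ℕ) (hΔ : ∀ x, dg Γ x ≤ Δ)
    (hin : ∀ x, x ∉ Bd → ∀ r, ¬ ∀ y, Γ.Adj x y →
      Relation.ReflTransGen (fun a b => Γ.Adj a b ∧ a ≠ x ∧ b ≠ x) r y) :
    (Finset.univ.filter (fun x => x ∈ Bd ∨ 3 ≤ dg Γ x)).card ≤ 3 * (Δ + 1) * Bd.card := by
  obtain ⟨F, hFle, hFac, hFr⟩ := SimpleGraph.exists_isAcyclic_reachable_eq_le (G := Γ)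
  have hreach : ∀ x z, Γ.Adj x z → Relation.ReflTransGen F.Adj x z := by
    intro x z h
    rw [← SimpleGraph.reachable_iff_reflTransGen, hFr]
    exact h.reachable
  have hfirst : ∀ x z, Γ.Adj x z → ∃ p ∈ nb F x,
      Relation.ReflTransGen (fun a b => F.Adj a b ∧ a ≠ x ∧ b ≠ x) p z := by
    intro x z h
    obtain ⟨p, hp, hr⟩ := rtg_first (hreach x z h) h.ne
    exact ⟨p, mem_nb.2 hp, hr⟩
  have hlift : ∀ x {p z : U}, Relation.ReflTransGen (fun a b => F.Adj a b ∧ a ≠ x ∧ b ≠ x) p z →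
      Relation.ReflTransGen (fun a b => Γ.Adj a b ∧ a ≠ x ∧ b ≠ x) p z := by
    intro x p z h
    exact Relation.ReflTransGen.mono (fun a b hab => ⟨hFle hab.1, hab.2⟩) _ _ h
  have hdeg2 : ∀ x, x ∉ Bd → 2 ≤ dg F x := by
    intro x hx
    by_contra hlt
    have h1 : (nb F x).card ≤ 1 := by
      have : dg F x = (nb F x).card := rfl
      omega
    rw [Finset.card_le_one] at h1
    rcases (nb F x).eq_empty_or_nonempty with h0 | ⟨p0, hp0⟩
    · apply hin x hx x
      intro y hy
      obtain ⟨p, hp, _⟩ := hfirst x y hy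
      simp [h0] at hp
    · apply hin x hx p0
      intro y hy
      obtain ⟨p, hp, hr⟩ := hfirst x y hy
      rw [h1 p hp p0 hp0] at hr
      exact hlift x hr
  set Sp : Finset U := Finset.univ.filter (fun x => x ∈ Bd ∨ 3 ≤ dg F x) with hSp
  have hSpcard : Sp.card ≤ 3 * Bd.card := by
    have h1 := forest_sum F hFac
    -- per-vertex inequality
    have h2 : ∀ x, (if x ∈ Sp then 1 else 0) + 2 ≤ dg F x + (if x ∈ Bd then 3 else 0) := by
      intro x
      by_cases hb : x ∈ Bd
      · have : x ∈ Sp := by simp [hSp, hb]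
        simp only [this, hb, if_true]; omega
      · have h3 := hdeg2 x hb
        by_cases hs : x ∈ Sp
        · have h4 : 3 ≤ dg F x := by
            simp only [hSp, Finset.mem_filter, Finset.mem_univ, true_and] at hs
            exact hs.resolve_left hb
          simp only [hs, hb, if_true, if_false]; omega
        · simp only [hs, hb, if_false]; omega
    have h3 := Finset.sum_le_sum (s := Finset.univ) fun x _ => h2 x
    rw [Finset.sum_add_distrib, Finset.sum_add_distrib] at h3
    simp only [Finset.sum_ite_mem, Finset.univ_inter, Finset.sum_const, smul_eq_mul,
      Finset.card_univ] at h3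
    omega
  have hns : ∀ x, x ∉ Sp → ∀ p ∈ nb F x, ∀ q ∈ nb F x, p ≠ q →
      ¬ Relation.ReflTransGen (fun a b => Γ.Adj a b ∧ a ≠ x ∧ b ≠ x) p q := by
    intro x hx p hp q hq hpq hr
    have hx' : x ∉ Bd ∧ ¬ 3 ≤ dg F x := by simpa [hSp] using hx
    have hpair : nb F x = {p, q} := by
      symm
      apply Finset.eq_of_subset_of_card_le
      · intro y hy
        simp only [Finset.mem_insert, Finset.mem_singleton] at hy
        rcases hy with rfl | rfl <;> assumption
      · rw [Finset.card_pair hpq]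
        have : dg F x = (nb F x).card := rfl
        omega
    apply hin x hx'.1 p
    intro y hy
    obtain ⟨p', hp', hr'⟩ := hfirst x y hy
    rw [hpair] at hp'
    simp only [Finset.mem_insert, Finset.mem_singleton] at hp'
    rcases hp' with rfl | rfl
    · exact hlift x hr'
    · exact hr.trans (hlift x hr')
  have hkey : ∀ x, x ∉ Sp → 3 ≤ dg Γ x → ∃ p ∈ Sp, x ∈ nb Γ p := by
    intro x hx h3
    have hx' : x ∉ Bd ∧ ¬ 3 ≤ dg F x := by simpa [hSp] using hx
    have : ∃ z ∈ nb Γ x, z ∉ nb F x := by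
      apply Finset.exists_mem_notMem_of_card_lt_card
      have h1 : dg F x = (nb F x).card := rfl
      have h2 : dg Γ x = (nb Γ x).card := rfl
      omega
    obtain ⟨z, hz, hzF⟩ := this
    rw [mem_nb] at hz
    obtain ⟨p, hp, hr⟩ := hfirst x z hz
    refine ⟨p, ?_, mem_nb.2 (hFle (mem_nb.1 hp)).symm⟩
    by_contra hpS
    have hpz : p ≠ z := by rintro rfl; exact hzF hp
    obtain ⟨p', hp', hr'⟩ := rtg_first hr hpz
    refine hns p hpS x (mem_nb.2 (mem_nb.1 hp).symm) p' (mem_nb.2 hp'.1) (Ne.symm hp'.2.2) ?_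
    refine Relation.ReflTransGen.head (b := z) ⟨hz, hp'.2.1.symm, hpz.symm⟩ ?_
    refine rtg_symm (fun a b h => ⟨h.1.symm, h.2.2, h.2.1⟩) ?_
    exact Relation.ReflTransGen.mono (fun a b hab => ⟨hFle hab.1.1, hab.2⟩) _ _ hr'
  have hsub : Finset.univ.filter (fun x => x ∈ Bd ∨ 3 ≤ dg Γ x) ⊆
      Sp.biUnion (fun p => insert p (nb Γ p)) := by
    intro x hx
    simp only [Finset.mem_filter, Finset.mem_univ, true_and] at hx
    rw [Finset.mem_biUnion]
    by_cases hxS : x ∈ Sp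
    · exact ⟨x, hxS, Finset.mem_insert_self _ _⟩
    · have hb : x ∉ Bd := fun h => hxS (by simp [hSp, h])
      obtain ⟨p, hp, hxp⟩ := hkey x hxS (hx.resolve_left hb)
      exact ⟨p, hp, Finset.mem_insert_of_mem hxp⟩
  calc _ ≤ _ := Finset.card_le_card hsub
    _ ≤ Sp.card * (Δ + 1) := by
      apply Finset.card_biUnion_le_card_mul
      intro p _
      exact (Finset.card_insert_le _ _).trans (Nat.add_le_add_right (hΔ p) 1)
    _ ≤ 3 * Bd.card * (Δ + 1) := Nat.mul_le_mul_right _ hSpcard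
    _ = _ := by ring

end Iso

section Iso2
variable {V : Type} [Fintype V] [DecidableEq V]

theorem iso_lemma {G : SimpleGraph V} {ℓ Δ : ℕ} (hgood : EvenSubgraphGood G ℓ)
    (heven : ∀ x, Even (dg G x)) (hΔ : ∀ x, dg G x ≤ Δ) (X : Finset V) (hX : X.card < ℓ) :
    (X.filter (fun x => 3 ≤ dg G x)).card ≤
      3 * (Δ + 1) * (X.filter (fun x => ∃ y, y ∉ X ∧ G.Adj x y)).card := by
  let Γ : SimpleGraph X := G.comap Subtype.val
  let Bd : Finset X := Finset.univ.filter (fun x => ∃ y, y ∉ X ∧ G.Adj x y)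
  have hΔ' : ∀ x, dg Γ x ≤ Δ := by
    intro x
    refine le_trans ?_ (hΔ x)
    refine Finset.card_le_card_of_injOn Subtype.val ?_ (Subtype.val_injective.injOn)
    intro y hy
    have : y ∈ nb Γ x := hy
    have h2 : Γ.Adj x y := mem_nb.1 this
    exact mem_nb.2 (show G.Adj x y from h2)
  have hmain := abstract_iso Γ Bd Δ hΔ' (by
    intro x hx r hr
    have hx' : ∀ y, G.Adj x y → y ∈ X := by
      intro y hy
      by_contra hyX
      exact hx (by simp only [Bd, Finset.mem_filter, Finset.mem_univ, true_and]; exact ⟨y, hyX, hy⟩)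
    have := even_ext hgood heven X x x.2 hx' r (by
      intro y hy
      have h1 := hr ⟨y, hx' y hy⟩ hy
      refine Relation.ReflTransGen.lift (r := fun a b : X => Γ.Adj a b ∧ a ≠ x ∧ b ≠ x)
        Subtype.val ?_ _ _ h1
      intro a b hab
      exact ⟨hab.1, a.2, b.2, fun h => hab.2.1 (Subtype.ext h), fun h => hab.2.2 (Subtype.ext h)⟩)
    omega)
  have e1 : (X.filter (fun x => 3 ≤ dg G x)).card ≤
      (Finset.univ.filter (fun x => x ∈ Bd ∨ 3 ≤ dg Γ x)).card := by
    rw [← Finset.card_map (Function.Embedding.subtype (· ∈ X))]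
    refine Finset.card_le_card ?_
    intro x hx
    rw [Finset.mem_filter] at hx
    rw [Finset.mem_map]
    refine ⟨⟨x, hx.1⟩, ?_, rfl⟩
    simp only [Finset.mem_filter, Finset.mem_univ, true_and]
    by_cases hb : (⟨x, hx.1⟩ : X) ∈ Bd
    · exact Or.inl hb
    · right
      refine hx.2.trans ?_
      change (nb G x).card ≤ (nb Γ ⟨x, hx.1⟩).card
      rw [← Finset.card_map (s := nb Γ ⟨x, hx.1⟩) (Function.Embedding.subtype (· ∈ X))]
      refine Finset.card_le_card ?_
      intro y hy
      rw [mem_nb] at hy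
      have hyX : y ∈ X := by
        by_contra hyX
        exact hb (by simp only [Bd, Finset.mem_filter, Finset.mem_univ, true_and]; exact ⟨y, hyX, hy⟩)
      rw [Finset.mem_map]
      exact ⟨⟨y, hyX⟩, mem_nb.2 hy, rfl⟩
  have e2 : Bd.card ≤ (X.filter (fun x => ∃ y, y ∉ X ∧ G.Adj x y)).card := by
    refine Finset.card_le_card_of_injOn Subtype.val ?_ (Subtype.val_injective.injOn)
    intro y hy
    have : y ∈ Bd := hy
    simp only [Bd, Finset.mem_filter, Finset.mem_univ, true_and] at this
    simp only [Finset.coe_filter, Set.mem_ofPred_eq]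
    exact ⟨y.2, this⟩
  exact e1.trans (hmain.trans (Nat.mul_le_mul_left _ e2))

end Iso2

section Diam
variable {V : Type} [Fintype V] [DecidableEq V]

theorem poincare' {G : SimpleGraph V} (hc : G.Connected) (hd : ∀ x, 0 < dg G x) (f : V → ℝ) :
    ∃ m : ℝ, ∑ x, (dg G x : ℝ) * (f x - m) = 0 ∧
    (1 - lambdaMax (lazyMatrix G)) * ∑ x, (dg G x : ℝ) * (f x - m) ^ 2 ≤ En G f := by
  have hpos : 0 < ∑ x, (dg G x : ℝ) := by
    obtain ⟨x0⟩ := hc.nonempty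
    refine Finset.sum_pos (fun x _ => by exact_mod_cast hd x) ⟨x0, Finset.mem_univ _⟩
  have h0 : ∑ x, (dg G x : ℝ) * (f x - (∑ x, (dg G x : ℝ) * f x) / ∑ x, (dg G x : ℝ)) = 0 := by
    simp only [mul_sub, Finset.sum_sub_distrib]
    rw [← Finset.sum_mul]
    field_simp
    ring
  refine ⟨_, h0, ?_⟩
  refine (poincare hc hd _ h0).trans (le_of_eq ?_)
  simp [En]

/-- Balls. -/
noncomputable def bal (G : SimpleGraph V) (u : V) (r : ℕ) : Finset V :=
  Finset.univ.filter (fun y => G.dist u y ≤ r)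

theorem ball_growth {G : SimpleGraph V} {Δ : ℕ} (hc : G.Connected) (hd : ∀ x, 0 < dg G x)
    (hΔ : ∀ x, dg G x ≤ Δ) (u : V) (r h : ℕ) (hh : 0 < h)
    (hhh : 8 * (Δ : ℝ) ≤ (1 - lambdaMax (lazyMatrix G)) * (h : ℝ) ^ 2)
    (hhalf : 2 * (bal G u (r + h)).card ≤ Fintype.card V) :
    2 * (bal G u r).card ≤ (bal G u (r + h)).card := by
  set f : V → ℝ := fun y => ((min (G.dist u y) (r + h) - r : ℕ) : ℝ) / h with hf
  have hh' : (0 : ℝ) < h := by exact_mod_cast hh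
  have hΔ0 : (0 : ℝ) < Δ := by
    have := (hd u).trans_le (hΔ u)
    exact_mod_cast this
  obtain ⟨m, hm0, hm⟩ := poincare' hc hd f
  have hlip : ∀ x y, G.Adj x y → G.dist u x ≤ G.dist u y + 1 := by
    intro x y hxy
    have h1 := hc.dist_triangle (u := u) (v := y) (w := x)
    have h2 : G.dist y x = 1 := SimpleGraph.dist_eq_one_iff_adj.2 hxy.symm
    omega
  set B := bal G u (r + h) with hB
  set B0 := bal G u r with hB0
  have hE : En G f ≤ 2 * (Δ : ℝ) * B.card / (h : ℝ) ^ 2 := by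
    have h1 : En G f ≤ ∑ x, ∑ y ∈ nb G x, (if x ∈ B then 1 / (h : ℝ) ^ 2 else 0)
        + ∑ x, ∑ y ∈ nb G x, (if y ∈ B then 1 / (h : ℝ) ^ 2 else 0) := by
      rw [En, ← Finset.sum_add_distrib]
      refine Finset.sum_le_sum fun x _ => ?_
      rw [← Finset.sum_add_distrib]
      refine Finset.sum_le_sum fun y hy => ?_
      rw [mem_nb] at hy
      have a1 := hlip x y hy
      have a2 := hlip y x hy.symm
      by_cases hxy : x ∈ B ∨ y ∈ B
      · have h2 : (f x - f y) ^ 2 ≤ 1 / (h : ℝ) ^ 2 := by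
          rw [hf]
          simp only
          rw [← sub_div, div_pow]
          apply div_le_div_of_nonneg_right _ (by positivity)
          rw [sq_le_one_iff_abs_le_one, abs_le]
          have b1 : (min (G.dist u x) (r + h) - r : ℕ) ≤ (min (G.dist u y) (r + h) - r : ℕ) + 1 := by
            omega
          have b2 : (min (G.dist u y) (r + h) - r : ℕ) ≤ (min (G.dist u x) (r + h) - r : ℕ) + 1 := by
            omega
          have b1' : ((min (G.dist u x) (r + h) - r : ℕ) : ℝ) ≤
            ((min (G.dist u y) (r + h) - r : ℕ) : ℝ) + 1 := by exact_mod_cast b1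
          have b2' : ((min (G.dist u y) (r + h) - r : ℕ) : ℝ) ≤
            ((min (G.dist u x) (r + h) - r : ℕ) : ℝ) + 1 := by exact_mod_cast b2
          constructor <;> linarith
        have h3 : (0 : ℝ) ≤ 1 / (h : ℝ) ^ 2 := by positivity
        rcases hxy with hx | hx
        · simp only [hx, if_true]
          split_ifs <;> linarith
        · simp only [hx, if_true]
          split_ifs <;> linarith
      · push Not at hxy
        simp only [hB, bal, Finset.mem_filter, Finset.mem_univ, true_and, not_le] at hxy
        have : f x = f y := by
          simp only [hf]
          rw [min_eq_right hxy.1.le, min_eq_right hxy.2.le]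
        rw [this, sub_self]
        have h3 : (0 : ℝ) ≤ 1 / (h : ℝ) ^ 2 := by positivity
        split_ifs <;> simp
    rw [nb_sum_swap G (fun x y => if y ∈ B then 1 / (h : ℝ) ^ 2 else 0),
      nb_sum_const G (fun x => if x ∈ B then 1 / (h : ℝ) ^ 2 else 0)] at h1
    have h2 : ∑ x, (dg G x : ℝ) * (if x ∈ B then 1 / (h : ℝ) ^ 2 else 0)
        ≤ ∑ x, (if x ∈ B then (Δ : ℝ) / (h : ℝ) ^ 2 else 0) := by
      refine Finset.sum_le_sum fun x _ => ?_
      split_ifs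
      · have : (dg G x : ℝ) ≤ Δ := by exact_mod_cast hΔ x
        rw [mul_one_div]
        gcongr
      · simp
    rw [Finset.sum_ite_mem, Finset.univ_inter, Finset.sum_const, nsmul_eq_mul] at h2
    calc En G f ≤ 2 * ((B.card : ℝ) * (Δ / (h : ℝ) ^ 2)) := by linarith
      _ = _ := by ring
  have hlow : (B0.card : ℝ) / 2 ≤ ∑ x, (dg G x : ℝ) * (f x - m) ^ 2 := by
    have h1 : ∀ x, (if x ∈ B0 then m ^ 2 else 0) + (if x ∈ Bᶜ then (1 - m) ^ 2 else 0) ≤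
        (dg G x : ℝ) * (f x - m) ^ 2 := by
      intro x
      have hd1 : (1 : ℝ) ≤ dg G x := by exact_mod_cast hd x
      by_cases hx : x ∈ B0
      · have hxB : x ∉ Bᶜ := by
          simp only [hB, hB0, bal, Finset.mem_filter, Finset.mem_univ, true_and,
            Finset.mem_compl] at hx ⊢
          omega
        have hfx : f x = 0 := by
          simp only [hB0, bal, Finset.mem_filter, Finset.mem_univ, true_and] at hx
          simp only [hf]
          have : min (G.dist u x) (r + h) - r = 0 := by omega
          rw [this]; simp
        simp only [hx, hxB, if_true, if_false, hfx]
        nlinarith [sq_nonneg m]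
      · by_cases hxB : x ∈ Bᶜ
        · have hfx : f x = 1 := by
            simp only [hB, bal, Finset.mem_filter, Finset.mem_univ, true_and,
              Finset.mem_compl, not_le] at hxB
            simp only [hf]
            have : min (G.dist u x) (r + h) - r = h := by omega
            rw [this]; field_simp
          simp only [hx, hxB, if_true, if_false, hfx]
          nlinarith [sq_nonneg (1 - m)]
        · simp only [hx, hxB, if_false]
          have : (0 : ℝ) ≤ (dg G x : ℝ) * (f x - m) ^ 2 := by positivity
          linarith
    have h2 := Finset.sum_le_sum (s := Finset.univ) fun x _ => h1 x
    rw [Finset.sum_add_distrib, Finset.sum_ite_mem, Finset.univ_inter, Finset.sum_const,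
      nsmul_eq_mul, Finset.sum_ite_mem, Finset.univ_inter, Finset.sum_const, nsmul_eq_mul] at h2
    have hsub : B0 ⊆ B := by
      intro x hx
      simp only [hB, hB0, bal, Finset.mem_filter, Finset.mem_univ, true_and] at hx ⊢
      omega
    have h3 : (B0.card : ℝ) ≤ (Bᶜ.card : ℝ) := by
      have e1 := Finset.card_le_card hsub
      have e2 := Finset.card_compl B
      have : B0.card ≤ Bᶜ.card := by omega
      exact_mod_cast this
    have h4 : (B0.card : ℝ) * (1 - m) ^ 2 ≤ (Bᶜ.card : ℝ) * (1 - m) ^ 2 :=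
      mul_le_mul_of_nonneg_right h3 (sq_nonneg _)
    have h5 : (0 : ℝ) ≤ B0.card := by positivity
    nlinarith [mul_nonneg h5 (sq_nonneg (2 * m - 1))]
  have hδ := (lam_facts hd).2.1
  set δ := 1 - lambdaMax (lazyMatrix G) with hδd
  have hδ0 : 0 < δ := by linarith
  have h1 : δ * ((B0.card : ℝ) / 2) ≤ 2 * (Δ : ℝ) * B.card / (h : ℝ) ^ 2 :=
    (mul_le_mul_of_nonneg_left hlow hδ0.le).trans (hm.trans hE)
  rw [le_div_iff₀ (by positivity)] at h1
  have h2 : 8 * (Δ : ℝ) * ((B0.card : ℝ) / 2) ≤ 2 * (Δ : ℝ) * B.card := by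
    have : 8 * (Δ : ℝ) * ((B0.card : ℝ) / 2) ≤ (δ * (h : ℝ) ^ 2) * ((B0.card : ℝ) / 2) :=
      mul_le_mul_of_nonneg_right hhh (by positivity)
    linarith
  have h3 : 2 * (B0.card : ℝ) ≤ B.card := by
    have : (2 * (Δ : ℝ)) * (2 * (B0.card : ℝ)) ≤ (2 * (Δ : ℝ)) * B.card := by linarith
    exact le_of_mul_le_mul_left this (by positivity)
  exact_mod_cast h3

theorem dist_bound {G : SimpleGraph V} {Δ : ℕ} (hc : G.Connected) (hd : ∀ x, 0 < dg G x)
    (hΔ : ∀ x, dg G x ≤ Δ) (h k : ℕ) (hh : 0 < h)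
    (hhh : 8 * (Δ : ℝ) ≤ (1 - lambdaMax (lazyMatrix G)) * (h : ℝ) ^ 2)
    (hk : Fintype.card V ≤ 2 ^ k) (u v : V) : G.dist u v ≤ 2 * (k * h) := by
  have hcard : 0 < Fintype.card V := Fintype.card_pos_iff.2 ⟨u⟩
  have hind : ∀ (u : V) (k : ℕ), Fintype.card V < 2 * (bal G u (k * h)).card ∨
      2 ^ k ≤ (bal G u (k * h)).card := by
    intro u k
    induction k with
    | zero =>
      right
      rw [pow_zero]
      exact Finset.card_pos.2 ⟨u, by simp [bal]⟩
    | succ k ih =>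
      by_cases hb : Fintype.card V < 2 * (bal G u ((k + 1) * h)).card
      · exact Or.inl hb
      · right
        have e : (k + 1) * h = k * h + h := by ring
        have hmono : (bal G u (k * h)).card ≤ (bal G u ((k + 1) * h)).card := by
          apply Finset.card_le_card
          intro x hx
          simp only [bal, Finset.mem_filter, Finset.mem_univ, true_and] at hx ⊢
          rw [e]; omega
        have h1 := ball_growth hc hd hΔ u (k * h) h hh hhh (by rw [← e]; omega)
        rw [← e] at h1
        rcases ih with h2 | h2
        · omega
        · rw [pow_succ]; omega
  have hbig : ∀ u, Fintype.card V < 2 * (bal G u (k * h)).card := by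
    intro u
    rcases hind u k with h1 | h1
    · exact h1
    · omega
  have hinter : ((bal G u (k * h)) ∩ (bal G v (k * h))).Nonempty := by
    rw [← Finset.card_pos]
    have h1 := Finset.card_union_add_card_inter (bal G u (k * h)) (bal G v (k * h))
    have h2 := Finset.card_le_univ ((bal G u (k * h)) ∪ (bal G v (k * h)))
    have h3 := hbig u
    have h4 := hbig v
    omega
  obtain ⟨w, hw⟩ := hinter
  simp only [bal, Finset.mem_filter, Finset.mem_univ, true_and, Finset.mem_inter] at hw
  have h1 := hc.dist_triangle (u := u) (v := w) (w := v)
  rw [G.dist_comm (u := w) (v := v)] at h1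
  omega

theorem geo_avoid {G : SimpleGraph V} (hc : G.Connected) (u x : V)
    (hmax : ∀ y, G.dist y u ≤ G.dist x u) (k : ℕ) : ∀ y, G.dist y u = k → y ≠ x →
    ∃ S : Finset V, S.card ≤ k + 1 ∧ y ∈ S ∧ x ∉ S ∧
      Relation.ReflTransGen (fun a b => G.Adj a b ∧ a ∈ S ∧ b ∈ S) u y := by
  induction k with
  | zero =>
    intro y hy hyx
    have : y = u := (hc.dist_eq_zero_iff).1 hy
    subst this
    exact ⟨{y}, by simp, by simp, by simpa using hyx.symm, Relation.ReflTransGen.refl⟩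
  | succ k ih =>
    intro y hy hyx
    obtain ⟨w, hw⟩ := (hc.preconnected y u).exists_walk_length_eq_dist
    cases w with
    | nil => simp at hy
    | @cons _ z _ hyz w' =>
      have h1 : G.dist z u ≤ k := by
        have := SimpleGraph.dist_le w'
        simp only [SimpleGraph.Walk.length_cons] at hw
        omega
      have h2 : G.dist z u = k := by
        have h3 := hc.dist_triangle (u := y) (v := z) (w := u)
        have h4 : G.dist y z = 1 := SimpleGraph.dist_eq_one_iff_adj.2 hyz
        omega
      have hzx : z ≠ x := by
        rintro rfl
        have := hmax y
        omega
      obtain ⟨S, hS, hzS, hxS, hr⟩ := ih z h2 hzx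
      refine ⟨insert y S, (Finset.card_insert_le _ _).trans (by omega),
        Finset.mem_insert_self _ _, ?_, ?_⟩
      · rw [Finset.mem_insert, not_or]; exact ⟨hyx.symm, hxS⟩
      · refine Relation.ReflTransGen.tail (Relation.ReflTransGen.mono ?_ _ _ hr)
          ⟨hyz.symm, Finset.mem_insert_of_mem hzS, Finset.mem_insert_self _ _⟩
        intro a b hab
        exact ⟨hab.1, Finset.mem_insert_of_mem hab.2.1, Finset.mem_insert_of_mem hab.2.2⟩

theorem ell_le_diam {G : SimpleGraph V} {ℓ Δ : ℕ} (hc : G.Connected)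
    (hgood : EvenSubgraphGood G ℓ)
    (heven : ∀ x, Even (dg G x)) (hΔ : ∀ x, dg G x ≤ Δ) (D : ℕ) (hD : ∀ u v, G.dist u v ≤ D) :
    ℓ ≤ 1 + Δ * (D + 1) := by
  obtain ⟨u⟩ := hc.nonempty
  obtain ⟨x, _, hx⟩ := Finset.exists_max_image Finset.univ (fun y => G.dist y u) ⟨u, Finset.mem_univ _⟩
  have hch : ∀ y, ∃ S : Finset V, S.card ≤ D + 1 ∧ (G.Adj x y → y ∈ S ∧ x ∉ S ∧
      Relation.ReflTransGen (fun a b => G.Adj a b ∧ a ∈ S ∧ b ∈ S) u y) := by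
    intro y
    by_cases hxy : G.Adj x y
    · obtain ⟨S, h1, h2, h3, h4⟩ := geo_avoid hc u x (fun y => hx y (Finset.mem_univ _)) _ y rfl
        hxy.ne.symm
      exact ⟨S, h1.trans (by have := hD y u; omega), fun _ => ⟨h2, h3, h4⟩⟩
    · exact ⟨∅, by simp, fun h => absurd h hxy⟩
  choose S hS hS2 using hch
  have := even_ext hgood heven (insert x ((nb G x).biUnion S)) x (Finset.mem_insert_self _ _)
    (fun y hy => Finset.mem_insert_of_mem (Finset.mem_biUnion.2 ⟨y, mem_nb.2 hy, (hS2 y hy).1⟩)) u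
    (by
      intro y hy
      refine Relation.ReflTransGen.mono ?_ _ _ (hS2 y hy).2.2
      rintro a b ⟨hab, ha, hb⟩
      have hxS := (hS2 y hy).2.1
      refine ⟨hab, Finset.mem_insert_of_mem (Finset.mem_biUnion.2 ⟨y, mem_nb.2 hy, ha⟩),
        Finset.mem_insert_of_mem (Finset.mem_biUnion.2 ⟨y, mem_nb.2 hy, hb⟩), ?_, ?_⟩
      · rintro rfl; exact hxS ha
      · rintro rfl; exact hxS hb)
  refine this.trans ((Finset.card_insert_le _ _).trans ?_)
  have h2 : ((nb G x).biUnion S).card ≤ (nb G x).card * (D + 1) :=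
    Finset.card_biUnion_le_card_mul _ _ _ fun y _ => hS y
  have h3 : (nb G x).card * (D + 1) ≤ Δ * (D + 1) := Nat.mul_le_mul_right _ (hΔ x)
  omega

/-- Constant in the bound on `ℓ`. -/
noncomputable def K1 (Δ : ℕ) : ℝ := 1 + Δ * (6 * (8 * Δ + 1) + 1)

theorem ell_bound {G : SimpleGraph V} {ℓ Δ : ℕ} (hc : G.Connected) (hd : ∀ x, 0 < dg G x)
    (hgood : EvenSubgraphGood G ℓ)
    (heven : ∀ x, Even (dg G x)) (hΔ : ∀ x, dg G x ≤ Δ)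
    (hL : 1 ≤ Real.log (Fintype.card V)) :
    (ℓ : ℝ) * Real.sqrt (1 - lambdaMax (lazyMatrix G)) ≤ K1 Δ * Real.log (Fintype.card V) := by
  obtain ⟨l0, l1, _⟩ := lam_facts hd
  set δ := 1 - lambdaMax (lazyMatrix G) with hδd
  set s := Real.sqrt δ with hs
  have hs0 : 0 < s := Real.sqrt_pos.2 (by linarith)
  have hs1 : s ≤ 1 := Real.sqrt_le_one.2 (by linarith)
  have hss : s * s = δ := Real.mul_self_sqrt (by linarith)
  set L := Real.log (Fintype.card V) with hLd
  have hΔ1 : (1 : ℝ) ≤ Δ := by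
    obtain ⟨u⟩ := hc.nonempty
    have := (hd u).trans_le (hΔ u)
    exact_mod_cast this
  set h := ⌈8 * (Δ : ℝ) / s⌉₊ with hh
  set k := ⌈2 * L⌉₊ with hk
  have hh1 : 8 * (Δ : ℝ) / s ≤ h := Nat.le_ceil _
  have hh2 : (h : ℝ) ≤ 8 * (Δ : ℝ) / s + 1 := (Nat.ceil_lt_add_one (by positivity)).le
  have hk1 : 2 * L ≤ k := Nat.le_ceil _
  have hk2 : (k : ℝ) ≤ 2 * L + 1 := (Nat.ceil_lt_add_one (by positivity)).le
  have hh0 : 0 < h := Nat.ceil_pos.2 (by positivity)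
  have hhs : 8 * (Δ : ℝ) ≤ h * s := by rwa [div_le_iff₀ hs0] at hh1
  have hcard : (0 : ℝ) < Fintype.card V := by
    by_contra hcon
    have : (Fintype.card V : ℝ) = 0 := le_antisymm (not_lt.1 hcon) (by positivity)
    rw [hLd, this, Real.log_zero] at hL
    linarith
  have hpow : Fintype.card V ≤ 2 ^ k := by
    have h1 : L ≤ k * Real.log 2 := by
      have := Real.log_two_gt_d9
      nlinarith
    have h2 : (Fintype.card V : ℝ) ≤ (2 : ℝ) ^ k := by
      rw [← Real.exp_log hcard, ← hLd]
      calc Real.exp L ≤ Real.exp (k * Real.log 2) := Real.exp_le_exp.2 h1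
        _ = _ := by rw [Real.exp_nat_mul, Real.exp_log (by norm_num)]
    exact_mod_cast h2
  have hdist := dist_bound hc hd hΔ h k hh0 (by
    rw [← hδd, ← hss]
    nlinarith) hpow
  have hℓ := ell_le_diam hc hgood heven hΔ _ hdist
  have hℓ' : (ℓ : ℝ) ≤ 1 + Δ * (2 * (k * h) + 1) := by exact_mod_cast hℓ
  have hk3 : (k : ℝ) ≤ 3 * L := by linarith
  have hhs2 : (h : ℝ) * s ≤ 8 * Δ + 1 := by
    have := mul_le_mul_of_nonneg_right hh2 hs0.le
    have e : (8 * (Δ : ℝ) / s + 1) * s = 8 * Δ + s := by field_simp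
    linarith
  have hkh : (k : ℝ) * (h * s) ≤ 3 * L * (8 * Δ + 1) := by
    apply mul_le_mul hk3 hhs2 (by positivity) (by positivity)
  calc (ℓ : ℝ) * s ≤ (1 + Δ * (2 * (k * h) + 1)) * s := mul_le_mul_of_nonneg_right hℓ' hs0.le
    _ = s + Δ * (2 * (k * (h * s)) + s) := by ring
    _ ≤ L + Δ * (2 * (3 * L * (8 * Δ + 1)) + L) := by
      have : s ≤ L := by linarith
      gcongr
    _ = K1 Δ * L := by rw [K1]; ring

end Diam

section Coarea
open MeasureTheory

theorem coarea {I : Type} (s : Finset I) (p q : I → ℝ) (h c : ℝ) (hp : ∀ i ∈ s, 0 ≤ p i)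
    (hh : 0 ≤ h) (hc : 0 ≤ c)
    (H : ∀ a, 0 ≤ a → a < h → c ≤ ((s.filter (fun i => p i ≤ a ∧ a < q i)).card : ℝ)) :
    c * h ≤ ∑ i ∈ s, max 0 (min (q i) h - p i) := by
  have h1 : ENNReal.ofReal (c * h) ≤ ENNReal.ofReal (∑ i ∈ s, max 0 (min (q i) h - p i)) := by
    calc ENNReal.ofReal (c * h) = ∫⁻ _a in Set.Ico 0 h, ENNReal.ofReal c := by
          rw [setLIntegral_const, Real.volume_Ico, sub_zero, ENNReal.ofReal_mul hc]
      _ ≤ ∫⁻ a in Set.Ico 0 h, ∑ i ∈ s, (Set.Ico (p i) (q i)).indicator (fun _ => 1) a := by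
          refine setLIntegral_mono' measurableSet_Ico fun a ha => ?_
          have h2 := H a ha.1 ha.2
          have h3 : ∑ i ∈ s, (Set.Ico (p i) (q i)).indicator (fun _ => (1 : ℝ≥0∞)) a =
              ((s.filter (fun i => p i ≤ a ∧ a < q i)).card : ℝ≥0∞) := by
            rw [Finset.card_filter]
            push_cast
            refine Finset.sum_congr rfl fun i _ => ?_
            simp only [Set.indicator_apply, Set.mem_Ico]
          rw [h3]
          refine (ENNReal.ofReal_le_ofReal h2).trans ?_
          rw [ENNReal.ofReal_natCast]
      _ = ∑ i ∈ s, ∫⁻ a in Set.Ico 0 h, (Set.Ico (p i) (q i)).indicator (fun _ => 1) a := by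
          rw [lintegral_finsetSum]
          intro i _
          exact measurable_const.indicator measurableSet_Ico
      _ ≤ ∑ i ∈ s, ENNReal.ofReal (max 0 (min (q i) h - p i)) := by
          refine Finset.sum_le_sum fun i hi => ?_
          rw [lintegral_indicator_const measurableSet_Ico, one_mul,
            Measure.restrict_apply measurableSet_Ico, Set.Ico_inter_Ico, Real.volume_Ico]
          apply ENNReal.ofReal_le_ofReal
          refine le_trans ?_ (le_max_right _ _)
          have := le_max_left (p i) 0
          simp only [sub_eq_add_neg] at *
          linarith
      _ = _ := by
          rw [ENNReal.ofReal_sum_of_nonneg]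
          intro i _
          exact le_max_left _ _
  exact (ENNReal.ofReal_le_ofReal_iff (Finset.sum_nonneg fun i _ => le_max_left _ _)).1 h1

end Coarea

section Func
variable {V : Type} [Fintype V] [DecidableEq V]

theorem ell_le_card {G : SimpleGraph V} {ℓ : ℕ} (hc : G.Connected)
    (hgood : EvenSubgraphGood G ℓ) (heven : ∀ x, Even (dg G x)) : ℓ ≤ Fintype.card V := by
  obtain ⟨u⟩ := hc.nonempty
  have := hgood u ⊤ ⟨u, trivial⟩ (by intro e he _; simpa using he) (by
    intro x
    have h := heven x
    rw [← ncard_eq_dg] at h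
    convert h using 2
    ext y
    simp)
  simpa [Set.ncard_univ] using this

/-- Level selection. -/
theorem exists_level (g : V → ℝ) (ℓ : ℕ) (hℓ : 0 < ℓ) (hn : ℓ ≤ Fintype.card V) :
    ∃ x0 : V, ℓ ≤ (Finset.univ.filter (fun x => g x ≤ g x0)).card ∧
      (Finset.univ.filter (fun x => g x < g x0)).card < ℓ := by
  have hne : (Finset.univ : Finset V).Nonempty := by
    rw [← Finset.card_pos, Finset.card_univ]; omega
  obtain ⟨M, _, hM⟩ := Finset.exists_max_image Finset.univ g hne
  set T := Finset.univ.filter (fun x0 => ℓ ≤ (Finset.univ.filter (fun x => g x ≤ g x0)).card) with hT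
  have hTM : M ∈ T := by
    simp only [hT, Finset.mem_filter, Finset.mem_univ, true_and]
    rw [Finset.filter_true_of_mem (fun x hx => hM x hx), Finset.card_univ]
    exact hn
  obtain ⟨x0, hx0, hmin⟩ := Finset.exists_min_image T g ⟨M, hTM⟩
  refine ⟨x0, by simpa [hT] using hx0, ?_⟩
  rcases (Finset.univ.filter (fun x => g x < g x0)).eq_empty_or_nonempty with h | h
  · rw [h]; simpa using hℓ
  · obtain ⟨y, hy, hymax⟩ := Finset.exists_max_image _ g h
    by_contra hcon
    push Not at hcon
    have hyT : y ∈ T := by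
      simp only [hT, Finset.mem_filter, Finset.mem_univ, true_and]
      refine hcon.trans (Finset.card_le_card ?_)
      intro z hz
      have := hymax z hz
      simpa using this
    have h1 := hmin y hyT
    simp only [Finset.mem_filter, Finset.mem_univ, true_and] at hy
    linarith

/-- Constants. -/
noncomputable def C1 (Δ : ℕ) : ℝ := K1 Δ ^ 2 * (3 * (Δ + 1)) ^ 2 * Δ

/-- Constants. -/
noncomputable def K3 (Δ : ℕ) : ℝ := 1 + Δ * (2 * C1 Δ + 2)

theorem level_bound {G : SimpleGraph V} {ℓ Δ j : ℕ} (hc : G.Connected) (hd : ∀ x, 0 < dg G x)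
    (hgood : EvenSubgraphGood G ℓ) (heven : ∀ x, Even (dg G x)) (hΔ : ∀ x, dg G x ≤ Δ)
    (hL : 1 ≤ Real.log (Fintype.card V)) (hj : Real.log (Fintype.card V) ≤ j)
    (Z : Finset V) (hZ : j ≤ (Z.filter (fun x => 3 ≤ dg G x)).card) (g : V → ℝ)
    (hg0 : ∀ x, 0 ≤ g x) (hgZ : ∀ x ∈ Z, g x = 0) (h : ℝ) (hh : 0 ≤ h)
    (hlev : (Finset.univ.filter (fun x => g x < h)).card < ℓ) :
    (1 - lambdaMax (lazyMatrix G)) * ℓ * h ^ 2 ≤ C1 Δ * En G g := by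
  obtain ⟨l0, l1, _⟩ := lam_facts hd
  set δ := 1 - lambdaMax (lazyMatrix G) with hδd
  have hell := ell_bound hc hd hgood heven hΔ hL
  rw [← hδd] at hell
  set s := Real.sqrt δ with hs
  have hs0 : 0 < s := Real.sqrt_pos.2 (by linarith)
  have hss : s * s = δ := Real.mul_self_sqrt (by linarith)
  have hj0 : (0 : ℝ) < j := by linarith
  set κ : ℝ := 3 * (Δ + 1) with hκ
  have hκ0 : 0 < κ := by positivity
  have hK1 : 0 < K1 Δ := by rw [K1]; positivity
  have hell2 : (ℓ : ℝ) * s ≤ K1 Δ * j := hell.trans (mul_le_mul_of_nonneg_left hj hK1.le)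
  set S := Finset.univ.filter (fun x => g x < h) with hS
  set darts : Finset (Σ _ : V, V) := Finset.univ.sigma (fun x => nb G x) with hdarts
  have hco := coarea darts (fun i => g i.1) (fun i => g i.2) h (j / κ) (fun i _ => hg0 _) hh
    (by positivity) (by
      intro a ha0 hah
      set X := Finset.univ.filter (fun x => g x ≤ a) with hX
      have hXc : X.card < ℓ := by
        refine lt_of_le_of_lt (Finset.card_le_card ?_) hlev
        intro x hx
        simp only [hX, hS, Finset.mem_filter, Finset.mem_univ, true_and] at hx ⊢
        linarith
      have hiso := iso_lemma hgood heven hΔ X hXc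
      have h1 : j ≤ (X.filter (fun x => 3 ≤ dg G x)).card := by
        refine hZ.trans (Finset.card_le_card ?_)
        intro x hx
        simp only [hX, Finset.mem_filter, Finset.mem_univ, true_and] at hx ⊢
        exact ⟨by rw [hgZ x hx.1]; exact ha0, hx.2⟩
      have h2 : (X.filter (fun x => ∃ y, y ∉ X ∧ G.Adj x y)).card ≤
          (darts.filter (fun i => g i.1 ≤ a ∧ a < g i.2)).card := by
        have hsub : X.filter (fun x => ∃ y, y ∉ X ∧ G.Adj x y) ⊆
            (darts.filter (fun i => g i.1 ≤ a ∧ a < g i.2)).image (fun i => i.1) := by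
          intro x hx
          simp only [hX, Finset.mem_filter, Finset.mem_univ, true_and, not_le] at hx
          obtain ⟨hxa, y, hya, hxy⟩ := hx
          rw [Finset.mem_image]
          refine ⟨⟨x, y⟩, ?_, rfl⟩
          simp only [hdarts, Finset.mem_filter, Finset.mem_sigma, Finset.mem_univ, true_and]
          exact ⟨mem_nb.2 hxy, hxa, hya⟩
        exact (Finset.card_le_card hsub).trans Finset.card_image_le
      rw [div_le_iff₀ hκ0]
      have h3 : j ≤ 3 * (Δ + 1) * (darts.filter (fun i => g i.1 ≤ a ∧ a < g i.2)).card :=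
        h1.trans (hiso.trans (Nat.mul_le_mul_left _ h2))
      have h4 : (j : ℝ) ≤ 3 * (Δ + 1) * (darts.filter (fun i => g i.1 ≤ a ∧ a < g i.2)).card := by
        exact_mod_cast h3
      rw [hκ]; linarith)
  set dS : Finset (Σ _ : V, V) := S.sigma (fun x => nb G x) with hdS
  have hle : ∑ i ∈ darts, max 0 (min (g i.2) h - g i.1) ≤ ∑ i ∈ dS, |g i.1 - g i.2| := by
    have hsub : dS ⊆ darts := by
      intro i hi
      simp only [hdS, hdarts, Finset.mem_sigma, Finset.mem_univ, true_and] at hi ⊢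
      exact hi.2
    rw [← Finset.sum_subset hsub]
    · refine Finset.sum_le_sum fun i _ => ?_
      apply max_le (abs_nonneg _)
      have h1 := min_le_left (g i.2) h
      have h2 := neg_abs_le (g i.1 - g i.2)
      linarith
    · intro i hi hni
      have : h ≤ g i.1 := by
        simp only [hdS, hdarts, hS, Finset.mem_sigma, Finset.mem_univ, true_and,
          Finset.mem_filter, not_and] at hi hni
        by_contra hcon
        exact hni (not_le.1 hcon) hi
      apply max_eq_left
      have := min_le_right (g i.2) h
      linarith
  have hcs : (∑ i ∈ dS, |g i.1 - g i.2|) ^ 2 ≤ (Δ * ℓ : ℝ) * En G g := by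
    refine (sq_sum_le_card_mul_sum_sq).trans ?_
    have h1 : (dS.card : ℝ) ≤ Δ * ℓ := by
      have : dS.card ≤ Δ * ℓ := by
        rw [hdS, Finset.card_sigma]
        calc _ ≤ ∑ x ∈ S, Δ := Finset.sum_le_sum fun x _ => hΔ x
          _ = S.card * Δ := by simp
          _ ≤ Δ * ℓ := by rw [mul_comm]; exact Nat.mul_le_mul_left _ hlev.le
      exact_mod_cast this
    have h2 : ∑ i ∈ dS, |g i.1 - g i.2| ^ 2 ≤ En G g := by
      simp only [sq_abs]
      rw [hdS, Finset.sum_sigma, En]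
      refine Finset.sum_le_sum_of_subset_of_nonneg (Finset.subset_univ _) ?_
      intro x _ _
      exact Finset.sum_nonneg fun _ _ => sq_nonneg _
    exact mul_le_mul h1 h2 (Finset.sum_nonneg fun _ _ => sq_nonneg _) (by positivity)
  have hfin : (j * h) ^ 2 ≤ κ ^ 2 * (Δ * ℓ * En G g) := by
    have h1 : j * h ≤ κ * ∑ i ∈ dS, |g i.1 - g i.2| := by
      have := hco.trans hle
      rw [div_mul_eq_mul_div, div_le_iff₀ hκ0] at this
      linarith
    calc (j * h) ^ 2 ≤ (κ * ∑ i ∈ dS, |g i.1 - g i.2|) ^ 2 := by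
          apply pow_le_pow_left₀ (by positivity) h1
      _ = κ ^ 2 * (∑ i ∈ dS, |g i.1 - g i.2|) ^ 2 := by ring
      _ ≤ _ := mul_le_mul_of_nonneg_left hcs (by positivity)
  have hsq : (ℓ : ℝ) ^ 2 * δ ≤ K1 Δ ^ 2 * j ^ 2 := by
    have := pow_le_pow_left₀ (by positivity) hell2 2
    rw [mul_pow, mul_pow, sq s, hss] at this
    exact this
  have hEn := En_nonneg G g
  have hℓ0 : (0 : ℝ) < ℓ := by
    have : 0 < ℓ := by omega
    exact_mod_cast this
  have h5 : (ℓ : ℝ) * (δ * ℓ * h ^ 2) ≤ (ℓ : ℝ) * (C1 Δ * En G g) := by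
    calc (ℓ : ℝ) * (δ * ℓ * h ^ 2) = ((ℓ : ℝ) ^ 2 * δ) * h ^ 2 := by ring
      _ ≤ (K1 Δ ^ 2 * j ^ 2) * h ^ 2 := mul_le_mul_of_nonneg_right hsq (sq_nonneg _)
      _ = K1 Δ ^ 2 * (j * h) ^ 2 := by ring
      _ ≤ K1 Δ ^ 2 * (κ ^ 2 * (Δ * ℓ * En G g)) := mul_le_mul_of_nonneg_left hfin (sq_nonneg _)
      _ = _ := by rw [C1, hκ]; ring
  exact le_of_mul_le_mul_left h5 hℓ0

/-- Good target sets. -/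
def GoodZ (G : SimpleGraph V) (ℓ j : ℕ) (Z : Finset V) : Prop :=
  ℓ ≤ Z.card ∨ j ≤ (Z.filter (fun x => 3 ≤ dg G x)).card

theorem C1_nonneg (Δ : ℕ) : 0 ≤ C1 Δ := by rw [C1]; positivity

theorem K3_ge (Δ : ℕ) : 1 ≤ K3 Δ := by
  have := C1_nonneg Δ
  rw [K3]
  have : (0 : ℝ) ≤ Δ * (2 * C1 Δ + 2) := by positivity
  linarith

theorem func_ineq {G : SimpleGraph V} {ℓ Δ j : ℕ} (hc : G.Connected) (hd : ∀ x, 0 < dg G x)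
    (hgood : EvenSubgraphGood G ℓ) (heven : ∀ x, Even (dg G x)) (hΔ : ∀ x, dg G x ≤ Δ)
    (hℓ : 0 < ℓ)
    (hL : 1 ≤ Real.log (Fintype.card V)) (hj : Real.log (Fintype.card V) ≤ j)
    (Z : Finset V) (hZ : GoodZ G ℓ j Z) (g : V → ℝ)
    (hg0 : ∀ x, 0 ≤ g x) (hgZ : ∀ x ∈ Z, g x = 0) :
    (1 - lambdaMax (lazyMatrix G)) * ℓ * ∑ x, (dg G x : ℝ) * g x ^ 2 ≤
      K3 Δ * Fintype.card V * En G g := by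
  obtain ⟨l0, l1, _⟩ := lam_facts hd
  obtain ⟨m, hm0, hm⟩ := poincare' hc hd g
  set δ := 1 - lambdaMax (lazyMatrix G) with hδd
  have hδ0 : 0 < δ := by linarith
  have hn := ell_le_card hc hgood heven
  obtain ⟨x0, hx1, hx2⟩ := exists_level g ℓ hℓ hn
  set h := g x0 with hh
  have hh0 : 0 ≤ h := hg0 x0
  have hEn := En_nonneg G g
  have hC1 := C1_nonneg Δ
  have hlev : δ * ℓ * h ^ 2 ≤ C1 Δ * En G g := by
    rcases hh0.eq_or_lt with h0 | h0
    · rw [← h0]; simp; positivity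
    · have hZ' : j ≤ (Z.filter (fun x => 3 ≤ dg G x)).card := by
        refine hZ.resolve_left ?_
        intro hcon
        have : Z.card ≤ (Finset.univ.filter (fun x => g x < h)).card := by
          refine Finset.card_le_card fun x hx => ?_
          simp only [Finset.mem_filter, Finset.mem_univ, true_and]
          rw [hgZ x hx]; exact h0
        omega
      exact level_bound hc hd hgood heven hΔ hL hj Z hZ' g hg0 hgZ h hh0 hx2
  have hℓ0 : (0 : ℝ) < ℓ := by exact_mod_cast hℓ
  have hmm : ∑ x, (dg G x : ℝ) * g x = m * ∑ x, (dg G x : ℝ) := by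
    simp only [mul_sub, Finset.sum_sub_distrib] at hm0
    rw [← Finset.sum_mul] at hm0
    linarith
  have hdpos : 0 < ∑ x, (dg G x : ℝ) := by
    obtain ⟨x0⟩ := hc.nonempty
    refine Finset.sum_pos (fun x _ => by exact_mod_cast hd x) ⟨x0, Finset.mem_univ _⟩
  have hdle : ∑ x, (dg G x : ℝ) ≤ Δ * Fintype.card V := by
    calc _ ≤ ∑ _x : V, (Δ : ℝ) := Finset.sum_le_sum fun x _ => by exact_mod_cast hΔ x
      _ = _ := by simp [mul_comm]
  have hmpos : 0 ≤ m := by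
    by_contra hcon
    push Not at hcon
    have h1 : 0 ≤ ∑ x, (dg G x : ℝ) * g x :=
      Finset.sum_nonneg fun x _ => mul_nonneg (by positivity) (hg0 x)
    nlinarith
  have hm2 : δ * ℓ * m ^ 2 ≤ (2 * C1 Δ + 2) * En G g := by
    by_cases hmh : m ≤ h
    · have h1 : m ^ 2 ≤ h ^ 2 := pow_le_pow_left₀ hmpos hmh 2
      have h2 : δ * ℓ * m ^ 2 ≤ δ * ℓ * h ^ 2 := mul_le_mul_of_nonneg_left h1 (by positivity)
      have h3 : 0 ≤ C1 Δ * En G g := by positivity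
      nlinarith
    · push Not at hmh
      have h1 : (ℓ : ℝ) * (m - h) ^ 2 ≤ ∑ x, (dg G x : ℝ) * (g x - m) ^ 2 := by
        calc (ℓ : ℝ) * (m - h) ^ 2 ≤
            ((Finset.univ.filter (fun x => g x ≤ h)).card : ℝ) * (m - h) ^ 2 :=
              mul_le_mul_of_nonneg_right (by exact_mod_cast hx1) (sq_nonneg _)
          _ = ∑ x ∈ Finset.univ.filter (fun x => g x ≤ h), (m - h) ^ 2 := by simp
          _ ≤ ∑ x ∈ Finset.univ.filter (fun x => g x ≤ h), (dg G x : ℝ) * (g x - m) ^ 2 := by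
            refine Finset.sum_le_sum fun x hx => ?_
            simp only [Finset.mem_filter, Finset.mem_univ, true_and] at hx
            have hd1 : (1 : ℝ) ≤ dg G x := by exact_mod_cast hd x
            have : (m - h) ^ 2 ≤ (g x - m) ^ 2 := by nlinarith
            nlinarith [sq_nonneg (g x - m)]
          _ ≤ _ := by
            refine Finset.sum_le_sum_of_subset_of_nonneg (Finset.subset_univ _) ?_
            intro x _ _
            positivity
      have h2 : δ * (ℓ * (m - h) ^ 2) ≤ En G g :=
        (mul_le_mul_of_nonneg_left h1 hδ0.le).trans hm
      have h3 : m ^ 2 ≤ 2 * h ^ 2 + 2 * (m - h) ^ 2 := by nlinarith [sq_nonneg (m - 2 * h)]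
      have h4 : δ * ℓ * m ^ 2 ≤ δ * ℓ * (2 * h ^ 2 + 2 * (m - h) ^ 2) :=
        mul_le_mul_of_nonneg_left h3 (by positivity)
      nlinarith
  have hsplit : ∑ x, (dg G x : ℝ) * g x ^ 2 =
      ∑ x, (dg G x : ℝ) * (g x - m) ^ 2 + m ^ 2 * ∑ x, (dg G x : ℝ) := by
    have h1 : ∑ x, (dg G x : ℝ) * (g x - m) ^ 2 =
        ∑ x, (dg G x : ℝ) * g x ^ 2 - 2 * m * ∑ x, (dg G x : ℝ) * g x
          + m ^ 2 * ∑ x, (dg G x : ℝ) := by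
      rw [Finset.mul_sum, Finset.mul_sum, ← Finset.sum_sub_distrib, ← Finset.sum_add_distrib]
      exact Finset.sum_congr rfl fun x _ => by ring
    rw [h1, hmm]; ring
  have hn' : (ℓ : ℝ) ≤ Fintype.card V := by exact_mod_cast hn
  rw [hsplit]
  calc δ * ℓ * (∑ x, (dg G x : ℝ) * (g x - m) ^ 2 + m ^ 2 * ∑ x, (dg G x : ℝ))
      = ℓ * (δ * ∑ x, (dg G x : ℝ) * (g x - m) ^ 2) +
        (δ * ℓ * m ^ 2) * ∑ x, (dg G x : ℝ) := by ring
    _ ≤ Fintype.card V * En G g + ((2 * C1 Δ + 2) * En G g) * (Δ * Fintype.card V) := by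
      apply add_le_add
      · exact mul_le_mul hn' hm (by positivity) (by positivity)
      · exact mul_le_mul hm2 hdle hdpos.le (by positivity)
    _ = _ := by rw [K3]; ring

end Func

section Avoid
variable {V : Type} [Fintype V] [DecidableEq V]

/-- Probability that the walk from `x` makes `k` departures all from outside `Z`. -/
noncomputable def psi (G : SimpleGraph V) (Z : Finset V) : ℕ → V → ℝ
  | 0, _ => 1
  | (k + 1), x => if x ∈ Z then 0 else (∑ y ∈ nb G x, psi G Z k y) / dg G x

theorem psi_nonneg (G : SimpleGraph V) (Z : Finset V) (k : ℕ) : ∀ x, 0 ≤ psi G Z k x := by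
  induction k with
  | zero => intro x; simp [psi]
  | succ k ih =>
    intro x
    rw [psi]
    split_ifs
    · exact le_rfl
    · exact div_nonneg (Finset.sum_nonneg fun y _ => ih y) (by positivity)

theorem psi_le_one (G : SimpleGraph V) (Z : Finset V) (k : ℕ) : ∀ x, psi G Z k x ≤ 1 := by
  induction k with
  | zero => intro x; simp [psi]
  | succ k ih =>
    intro x
    rw [psi]
    split_ifs
    · exact zero_le_one
    · apply div_le_one_of_le₀ _ (by positivity)
      calc _ ≤ ∑ y ∈ nb G x, (1 : ℝ) := Finset.sum_le_sum fun y _ => ih y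
        _ = _ := by simp [dg]

theorem contract {G : SimpleGraph V} {Z : Finset V} {c : ℝ} (hc : 0 < c) (hd : ∀ x, 0 < dg G x)
    (hB : ∀ g : V → ℝ, (∀ x, 0 ≤ g x) → (∀ x ∈ Z, g x = 0) →
      ∑ x, ∑ y ∈ nb G x, g x * g y ≤ c * ∑ x, (dg G x : ℝ) * g x ^ 2)
    (g f : V → ℝ) (hg0 : ∀ x, 0 ≤ g x) (hgZ : ∀ x ∈ Z, g x = 0)
    (hf : ∀ x, f x = if x ∈ Z then 0 else (∑ y ∈ nb G x, g y) / dg G x) :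
    ∑ x, (dg G x : ℝ) * f x ^ 2 ≤ c ^ 2 * ∑ x, (dg G x : ℝ) * g x ^ 2 := by
  have hf0 : ∀ x, 0 ≤ f x := by
    intro x
    rw [hf]
    split_ifs
    · exact le_rfl
    · exact div_nonneg (Finset.sum_nonneg fun y _ => hg0 y) (by positivity)
  have hfZ : ∀ x ∈ Z, f x = 0 := fun x hx => by rw [hf, if_pos hx]
  have h1 : ∑ x, (dg G x : ℝ) * f x ^ 2 = ∑ x, ∑ y ∈ nb G x, f x * g y := by
    refine Finset.sum_congr rfl fun x _ => ?_
    rw [← Finset.mul_sum]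
    by_cases hx : x ∈ Z
    · rw [hfZ x hx]; simp
    · have h2 := hf x
      rw [if_neg hx] at h2
      have h3 : (dg G x : ℝ) ≠ 0 := by exact_mod_cast (hd x).ne'
      have h4 : ∑ y ∈ nb G x, g y = dg G x * f x := by rw [h2]; field_simp
      rw [h4]; ring
  have h2 := hB (fun x => f x + c * g x)
    (fun x => add_nonneg (hf0 x) (mul_nonneg hc.le (hg0 x)))
    (fun x hx => by rw [hfZ x hx, hgZ x hx]; simp)
  have h3 := hB (fun x => |f x - c * g x|) (fun x => abs_nonneg _)
    (fun x hx => by rw [hfZ x hx, hgZ x hx]; simp)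
  have h4 : - ∑ x, ∑ y ∈ nb G x, (f x - c * g x) * (f y - c * g y) ≤
      ∑ x, ∑ y ∈ nb G x, |f x - c * g x| * |f y - c * g y| := by
    rw [← Finset.sum_neg_distrib]
    refine Finset.sum_le_sum fun x _ => ?_
    rw [← Finset.sum_neg_distrib]
    refine Finset.sum_le_sum fun y _ => ?_
    rw [← abs_mul]
    exact neg_le_abs _
  have hswap : ∑ x, ∑ y ∈ nb G x, g x * f y = ∑ x, ∑ y ∈ nb G x, f x * g y := by
    rw [nb_sum_swap]
    simp only [mul_comm]
  have h5 : ∑ x, ∑ y ∈ nb G x, (f x + c * g x) * (f y + c * g y)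
      - ∑ x, ∑ y ∈ nb G x, (f x - c * g x) * (f y - c * g y)
      = 2 * c * ∑ x, ∑ y ∈ nb G x, f x * g y + 2 * c * ∑ x, ∑ y ∈ nb G x, g x * f y := by
    rw [Finset.mul_sum, Finset.mul_sum, ← Finset.sum_sub_distrib, ← Finset.sum_add_distrib]
    refine Finset.sum_congr rfl fun x _ => ?_
    rw [Finset.mul_sum, Finset.mul_sum, ← Finset.sum_sub_distrib, ← Finset.sum_add_distrib]
    exact Finset.sum_congr rfl fun y _ => by ring
  have h6 : ∑ x, (dg G x : ℝ) * (f x + c * g x) ^ 2 + ∑ x, (dg G x : ℝ) * |f x - c * g x| ^ 2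
      = 2 * ∑ x, (dg G x : ℝ) * f x ^ 2 + 2 * c ^ 2 * ∑ x, (dg G x : ℝ) * g x ^ 2 := by
    rw [Finset.mul_sum, Finset.mul_sum, ← Finset.sum_add_distrib, ← Finset.sum_add_distrib]
    exact Finset.sum_congr rfl fun y _ => by rw [sq_abs]; ring
  rw [hswap, ← h1] at h5
  have h7 : 4 * c * ∑ x, (dg G x : ℝ) * f x ^ 2 ≤
      c * (2 * ∑ x, (dg G x : ℝ) * f x ^ 2 + 2 * c ^ 2 * ∑ x, (dg G x : ℝ) * g x ^ 2) := by
    rw [← h6]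
    linarith
  have h8 : (2 * c) * ∑ x, (dg G x : ℝ) * f x ^ 2 ≤
      (2 * c) * (c ^ 2 * ∑ x, (dg G x : ℝ) * g x ^ 2) := by linarith
  exact le_of_mul_le_mul_left h8 (by positivity)

theorem psi_decay {G : SimpleGraph V} {Z : Finset V} {c : ℝ} {Δ : ℕ} (hc : 0 < c)
    (hd : ∀ x, 0 < dg G x) (hΔ : ∀ x, dg G x ≤ Δ)
    (hB : ∀ g : V → ℝ, (∀ x, 0 ≤ g x) → (∀ x ∈ Z, g x = 0) →
      ∑ x, ∑ y ∈ nb G x, g x * g y ≤ c * ∑ x, (dg G x : ℝ) * g x ^ 2) (k : ℕ) (u : V) :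
    psi G Z (k + 1) u ≤ c ^ k * (Δ * Fintype.card V) := by
  have hN : ∀ k, ∑ x, (dg G x : ℝ) * psi G Z (k + 1) x ^ 2 ≤
      (c ^ k) ^ 2 * (Δ * Fintype.card V) := by
    intro k
    induction k with
    | zero =>
      calc _ ≤ ∑ _x : V, (Δ : ℝ) := by
            refine Finset.sum_le_sum fun x _ => ?_
            have h1 : (dg G x : ℝ) ≤ Δ := by exact_mod_cast hΔ x
            have h2 : psi G Z (0 + 1) x ^ 2 ≤ 1 := pow_le_one₀ (psi_nonneg _ _ _ _) (psi_le_one _ _ _ _)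
            calc _ ≤ (Δ : ℝ) * 1 := mul_le_mul h1 h2 (sq_nonneg _) (by positivity)
              _ = _ := mul_one _
        _ = _ := by simp [mul_comm]
    | succ k ih =>
      refine (contract hc hd hB (psi G Z (k + 1)) (psi G Z (k + 1 + 1)) (psi_nonneg _ _ _)
        (fun x hx => by rw [psi, if_pos hx]) (fun x => by rw [psi])).trans ?_
      calc _ ≤ c ^ 2 * ((c ^ k) ^ 2 * (Δ * Fintype.card V)) :=
            mul_le_mul_of_nonneg_left ih (sq_nonneg _)
        _ = _ := by ring
  have hbig : (1 : ℝ) ≤ Δ * Fintype.card V := by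
    have h1 : 0 < Δ := (hd u).trans_le (hΔ u)
    have h2 : 0 < Fintype.card V := Fintype.card_pos_iff.2 ⟨u⟩
    exact_mod_cast Nat.mul_pos h1 h2
  apply le_of_sq_le_sq _ (by positivity)
  calc psi G Z (k + 1) u ^ 2 ≤ (dg G u : ℝ) * psi G Z (k + 1) u ^ 2 := by
        have : (1 : ℝ) ≤ dg G u := by exact_mod_cast hd u
        nlinarith [sq_nonneg (psi G Z (k + 1) u)]
    _ ≤ ∑ x, (dg G x : ℝ) * psi G Z (k + 1) x ^ 2 :=
        Finset.single_le_sum (f := fun x => (dg G x : ℝ) * psi G Z (k + 1) x ^ 2)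
          (fun x _ => by positivity) (Finset.mem_univ u)
    _ ≤ (c ^ k) ^ 2 * (Δ * Fintype.card V) := hN k
    _ ≤ (c ^ k) ^ 2 * (Δ * Fintype.card V) ^ 2 := by
        apply mul_le_mul_of_nonneg_left _ (sq_nonneg _)
        nlinarith
    _ = _ := by ring

/-- Spectral rate. -/
noncomputable def gam (G : SimpleGraph V) (ℓ Δ : ℕ) : ℝ :=
  (1 - lambdaMax (lazyMatrix G)) * ℓ / (2 * K3 Δ * Fintype.card V)

theorem gam_facts {G : SimpleGraph V} {ℓ Δ : ℕ} (hc : G.Connected) (hd : ∀ x, 0 < dg G x)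
    (hgood : EvenSubgraphGood G ℓ) (heven : ∀ x, Even (dg G x)) (hℓ : 0 < ℓ) :
    0 < gam G ℓ Δ ∧ gam G ℓ Δ ≤ 1 / 2 := by
  obtain ⟨l0, l1, _⟩ := lam_facts hd
  obtain ⟨u⟩ := hc.nonempty
  have h2 : (0 : ℝ) < Fintype.card V := by exact_mod_cast Fintype.card_pos_iff.2 ⟨u⟩
  have hn : (ℓ : ℝ) ≤ Fintype.card V := by exact_mod_cast ell_le_card hc hgood heven
  have hℓ0 : (0 : ℝ) < ℓ := by exact_mod_cast hℓ
  have hK := K3_ge Δ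
  constructor
  · rw [gam]
    apply div_pos (mul_pos (by linarith) hℓ0) (by positivity)
  · rw [gam, div_le_iff₀ (by positivity)]
    have h3 : (1 - lambdaMax (lazyMatrix G)) * ℓ ≤ 1 * Fintype.card V :=
      mul_le_mul (by linarith) hn hℓ0.le zero_le_one
    nlinarith

theorem psi_bound {G : SimpleGraph V} {ℓ Δ j : ℕ} (hc : G.Connected) (hd : ∀ x, 0 < dg G x)
    (hgood : EvenSubgraphGood G ℓ) (heven : ∀ x, Even (dg G x)) (hΔ : ∀ x, dg G x ≤ Δ)
    (hℓ : 0 < ℓ)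
    (hL : 1 ≤ Real.log (Fintype.card V)) (hj : Real.log (Fintype.card V) ≤ j)
    (Z : Finset V) (hZ : GoodZ G ℓ j Z) (k : ℕ) (u : V) :
    psi G Z (k + 1) u ≤ (1 - gam G ℓ Δ) ^ k * (Δ * Fintype.card V) := by
  obtain ⟨g0, g1⟩ := gam_facts (Δ := Δ) hc hd hgood heven hℓ
  refine psi_decay (by linarith) hd hΔ ?_ k u
  intro g hg0 hgZ
  have h1 := func_ineq hc hd hgood heven hΔ hℓ hL hj Z hZ g hg0 hgZ
  have h2 : (0 : ℝ) < Fintype.card V := by exact_mod_cast Fintype.card_pos_iff.2 ⟨u⟩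
  have hK := K3_ge Δ
  rw [En_eq] at h1
  have h3 : gam G ℓ Δ * ∑ x, (dg G x : ℝ) * g x ^ 2 ≤
      ∑ x, (dg G x : ℝ) * g x ^ 2 - ∑ x, ∑ y ∈ nb G x, g x * g y := by
    rw [gam, div_mul_eq_mul_div, div_le_iff₀ (by positivity)]
    refine h1.trans (le_of_eq (by ring))
  linarith

end Avoid

section Hist
variable {V : Type} [Fintype V] [DecidableEq V]

/-- The current vertex has an untraversed edge. -/
def isBlue (G : SimpleGraph V) : List V → Prop
  | [] => False
  | (y :: h) => ∃ z : V, G.Adj y z ∧ s(y, z) ∉ trav (y :: h)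

/-- Vertices from which a random (red) step was made. -/
noncomputable def redList (G : SimpleGraph V) : List V → List V
  | [] => []
  | [_] => []
  | (_ :: y :: h) => if isBlue G (y :: h) then redList G (y :: h) else y :: redList G (y :: h)

/-- Position after the last red step. -/
noncomputable def rho (G : SimpleGraph V) (u : V) : List V → V
  | [] => u
  | [x] => x
  | (x :: y :: h) => if isBlue G (y :: h) then rho G u (y :: h) else x

/-- Possible histories. -/
inductive Hist (G : SimpleGraph V) (u : V) : List V → Prop
  | base : Hist G u [u]
  | blue (x y : V) (h : List V) : Hist G u (y :: h) → G.Adj y x → s(y, x) ∉ trav (y :: h) →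
      Hist G u (x :: y :: h)
  | red (x y : V) (h : List V) : Hist G u (y :: h) → G.Adj y x → ¬ isBlue G (y :: h) →
      Hist G u (x :: y :: h)

theorem hist_of_traj {G : SimpleGraph V} {A : List V → V} (hA : ValidRule G A) (u : V) :
    ∀ h : List V, trajProb G A u h ≠ 0 → Hist G u h
  | [], h0 => by simp [trajProb] at h0
  | [x], h0 => by
    simp only [trajProb, ne_eq, ite_eq_right_iff, one_ne_zero, imp_false, not_not] at h0
    subst h0
    exact Hist.base
  | (x :: y :: h), h0 => by
    rw [trajProb] at h0
    have h1 := hist_of_traj hA u (y :: h) (right_ne_zero_of_mul h0)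
    have h2 := left_ne_zero_of_mul h0
    rw [eStep] at h2
    by_cases hb : ∃ z : V, G.Adj y z ∧ s(y, z) ∉ trav (y :: h)
    · rw [if_pos hb] at h2
      have hx : x = A (y :: h) := by
        by_contra hne
        rw [if_neg hne] at h2
        exact h2 rfl
      obtain ⟨a1, a2⟩ := hA y h hb
      rw [← hx] at a1 a2
      exact Hist.blue x y h h1 a1 a2
    · rw [if_neg hb] at h2
      have hxy : G.Adj y x := by
        by_contra hne
        rw [if_neg hne] at h2
        exact h2 rfl
      exact Hist.red x y h h1 hxy hb

theorem eStep_nonneg (G : SimpleGraph V) (A : List V → V) (h : List V) (x : V) :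
    0 ≤ eStep G A h x := by
  cases h with
  | nil => simp [eStep]
  | cons y h =>
    rw [eStep]
    split_ifs <;> positivity

theorem traj_nonneg (G : SimpleGraph V) (A : List V → V) (u : V) :
    ∀ h : List V, 0 ≤ trajProb G A u h
  | [] => by simp [trajProb]
  | [x] => by rw [trajProb]; split_ifs <;> norm_num
  | (x :: y :: h) => by
    rw [trajProb]
    exact mul_nonneg (eStep_nonneg _ _ _ _) (traj_nonneg G A u (y :: h))

theorem trav_cons (x y : V) (h : List V) : trav (x :: y :: h) = s(x, y) :: trav (y :: h) := by
  simp [trav]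

/-- Untraversed neighbours. -/
noncomputable def bnb (G : SimpleGraph V) (h : List V) (z : V) : Finset V :=
  Finset.univ.filter (fun w => G.Adj z w ∧ s(z, w) ∉ trav h)

theorem bnb_blue {G : SimpleGraph V} (x y : V) (h : List V) (hxy : G.Adj y x)
    (hb : s(y, x) ∉ trav (y :: h)) (z : V) :
    (bnb G (y :: h) z).card = (bnb G (x :: y :: h) z).card +
      ((if z = x then 1 else 0) + (if z = y then 1 else 0)) := by
  have hne := hxy.ne
  by_cases hzx : z = x
  · have hzy : z ≠ y := by rw [hzx]; exact hne.symm
    have : bnb G (y :: h) z = insert y (bnb G (x :: y :: h) z) := by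
      ext w
      simp only [bnb, Finset.mem_filter, Finset.mem_univ, true_and, Finset.mem_insert, trav_cons,
        List.mem_cons, not_or]
      subst hzx
      constructor
      · rintro ⟨h1, h2⟩
        by_cases hwy : w = y
        · exact Or.inl hwy
        · exact Or.inr ⟨h1, by simp [hwy, hzy], h2⟩
      · rintro (h1 | ⟨h1, _, h2⟩)
        · subst h1; exact ⟨hxy.symm, by rw [Sym2.eq_swap]; exact hb⟩
        · exact ⟨h1, h2⟩
    rw [this, Finset.card_insert_of_notMem, if_pos hzx, if_neg hzy]
    simp [bnb, trav_cons, hzx]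
  · by_cases hzy : z = y
    · have : bnb G (y :: h) z = insert x (bnb G (x :: y :: h) z) := by
        ext w
        simp only [bnb, Finset.mem_filter, Finset.mem_univ, true_and, Finset.mem_insert, trav_cons,
          List.mem_cons, not_or]
        subst hzy
        constructor
        · rintro ⟨h1, h2⟩
          by_cases hwx : w = x
          · exact Or.inl hwx
          · refine Or.inr ⟨h1, ?_, h2⟩
            rw [Sym2.eq_swap]
            intro h3
            rw [Sym2.eq_iff] at h3
            rcases h3 with h3 | h3
            · exact hwx h3.1
            · exact hzx h3.2
        · rintro (h1 | ⟨h1, _, h2⟩)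
          · subst h1; exact ⟨hxy, hb⟩
          · exact ⟨h1, h2⟩
      rw [this, Finset.card_insert_of_notMem, if_neg hzx, if_pos hzy]
      simp [bnb, trav_cons, hzy, Sym2.eq_swap]
    · have : bnb G (y :: h) z = bnb G (x :: y :: h) z := by
        ext w
        simp only [bnb, Finset.mem_filter, Finset.mem_univ, true_and, trav_cons,
          List.mem_cons, not_or]
        constructor
        · rintro ⟨h1, h2⟩
          refine ⟨h1, ?_, h2⟩
          intro h3
          rw [Sym2.eq_iff] at h3
          rcases h3 with h3 | h3
          · exact hzx h3.1
          · exact hzy h3.1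
        · rintro ⟨h1, _, h2⟩
          exact ⟨h1, h2⟩
      rw [this]; simp [hzx, hzy]

theorem red_edge {G : SimpleGraph V} {x y : V} {h : List V} (hxy : G.Adj y x)
    (hr : ¬ isBlue G (y :: h)) : s(x, y) ∈ trav (y :: h) := by
  by_contra hcon
  exact hr ⟨x, hxy, by rw [Sym2.eq_swap]; exact hcon⟩

theorem bnb_red {G : SimpleGraph V} {x y : V} {h : List V} (hxy : G.Adj y x)
    (hr : ¬ isBlue G (y :: h)) (z : V) : bnb G (x :: y :: h) z = bnb G (y :: h) z := by
  ext w
  simp only [bnb, Finset.mem_filter, Finset.mem_univ, true_and, trav_cons, List.mem_cons, not_or]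
  constructor
  · rintro ⟨h1, _, h2⟩; exact ⟨h1, h2⟩
  · rintro ⟨h1, h2⟩
    exact ⟨h1, fun h3 => h2 (h3 ▸ red_edge hxy hr), h2⟩

theorem parity {G : SimpleGraph V} (heven : ∀ x, Even (dg G x)) (u : V) (h : List V)
    (hh : Hist G u h) : ∀ (x : V) (t : List V), h = x :: t → ∀ z,
      (Odd (bnb G h z).card ↔ ((z = x ∧ ¬ z = rho G u h) ∨ (z = rho G u h ∧ ¬ z = x))) := by
  induction hh with
  | base =>
    rintro x t he z
    obtain ⟨rfl, rfl⟩ : u = x ∧ ([] : List V) = t := by simpa using he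
    have h1 : bnb G [u] z = nb G z := by
      ext w; simp [bnb, nb, trav]
    have h2 := heven z
    rw [h1]
    change Odd (dg G z) ↔ _
    rw [← Nat.not_even_iff_odd]
    simp [h2, rho]
  | blue x y h _ hxy hb ih =>
    rintro x' t he z
    obtain ⟨rfl, rfl⟩ : x = x' ∧ (y :: h) = t := by simpa using he
    have h1 := ih y h rfl z
    have h2 := bnb_blue x y h hxy hb z
    have hbl : isBlue G (y :: h) := ⟨x, hxy, hb⟩
    rw [rho, if_pos hbl]
    have hne := hxy.ne
    rw [h2] at h1
    by_cases a1 : z = x <;> by_cases a2 : z = y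
    · exact absurd (a2.symm.trans a1) hne
    · simp only [a1, a2, if_true, if_false] at h1 ⊢
      have h3 := Ne.symm hne
      simp only [h3, if_false, add_zero, Nat.odd_add_one, false_and, or_false, true_and,
        not_false_eq_true, and_true, false_or, not_true_eq_false, and_false] at h1 ⊢
      tauto
    · simp only [a1, a2, if_true, if_false] at h1 ⊢
      simp only [hne, if_false, zero_add, Nat.odd_add_one, false_and, or_false, true_and,
        not_false_eq_true, and_true, false_or, not_true_eq_false, and_false] at h1 ⊢
      tauto
    · simp only [a1, a2, if_false, add_zero] at h1 ⊢
      exact h1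
  | red x y h _ hxy hr ih =>
    rintro x' t he z
    obtain ⟨rfl, rfl⟩ : x = x' ∧ (y :: h) = t := by simpa using he
    rw [bnb_red hxy hr, rho, if_neg hr]
    have h1 := ih y h rfl
    have h2 : bnb G (y :: h) y = ∅ := by
      ext w
      simp only [bnb, Finset.mem_filter, Finset.mem_univ, true_and, Finset.notMem_empty, iff_false]
      intro h3
      exact hr ⟨w, h3⟩
    have h3 := h1 y
    rw [h2] at h3
    simp only [Finset.card_empty, Nat.not_odd_zero, true_and, not_true_eq_false, and_false,
      or_false, false_iff, not_not] at h3
    rw [h1 z, ← h3]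
    tauto

theorem red_rho {G : SimpleGraph V} (heven : ∀ x, Even (dg G x)) {u y : V} {h : List V}
    (hh : Hist G u (y :: h)) (hr : ¬ isBlue G (y :: h)) :
    rho G u (y :: h) = y ∧ ∀ z, Even (bnb G (y :: h) z).card := by
  have h1 := parity heven u (y :: h) hh y h rfl
  have h2 : bnb G (y :: h) y = ∅ := by
    ext w
    simp only [bnb, Finset.mem_filter, Finset.mem_univ, true_and, Finset.notMem_empty, iff_false]
    intro h3
    exact hr ⟨w, h3⟩
  have h3 := h1 y
  rw [h2] at h3
  simp only [Finset.card_empty, Nat.not_odd_zero, true_and, not_true_eq_false, and_false,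
    or_false, false_iff, not_not] at h3
  refine ⟨h3.symm, fun z => ?_⟩
  rw [← Nat.not_odd_iff_even, h1 z, ← h3]
  tauto

theorem redList_full {G : SimpleGraph V} {u : V} {h : List V} (hh : Hist G u h) :
    ∀ r ∈ redList G h, ∀ w, G.Adj r w → s(r, w) ∈ trav h := by
  induction hh with
  | base => simp [redList]
  | blue x y h _ hxy hb ih =>
    have hbl : isBlue G (y :: h) := ⟨x, hxy, hb⟩
    rw [redList, if_pos hbl, trav_cons]
    intro r hr w hw
    exact List.mem_cons_of_mem _ (ih r hr w hw)
  | red x y h _ hxy hr ih =>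
    rw [redList, if_neg hr, trav_cons]
    intro r hr' w hw
    apply List.mem_cons_of_mem
    rcases List.mem_cons.1 hr' with rfl | h1
    · by_contra hcon
      exact hr ⟨w, hw, hcon⟩
    · exact ih r h1 w hw

/-- The set of all edges as a finset. -/
noncomputable def edg (G : SimpleGraph V) : Finset (Sym2 V) :=
  (Finset.univ.sigma (fun x => nb G x)).image (fun i : (Σ _ : V, V) => s(i.1, i.2))

theorem edg_card {G : SimpleGraph V} {Δ : ℕ} (hΔ : ∀ x, dg G x ≤ Δ) :
    (edg G).card ≤ Δ * Fintype.card V := by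
  refine Finset.card_image_le.trans ?_
  rw [Finset.card_sigma]
  calc _ ≤ ∑ _x : V, Δ := Finset.sum_le_sum fun x _ => hΔ x
    _ = _ := by simp [mul_comm]

theorem mem_edg {G : SimpleGraph V} {x y : V} (h : G.Adj x y) : s(x, y) ∈ edg G := by
  rw [edg, Finset.mem_image]
  exact ⟨⟨x, y⟩, by simpa using mem_nb.2 h, rfl⟩

theorem hist_len {G : SimpleGraph V} {u : V} {h : List V} (hh : Hist G u h) :
    (trav h).toFinset ⊆ edg G ∧
    h.length ≤ 1 + (redList G h).length + (trav h).toFinset.card := by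
  induction hh with
  | base => simp [trav]
  | blue x y h _ hxy hb ih =>
    have hbl : isBlue G (y :: h) := ⟨x, hxy, hb⟩
    rw [redList, if_pos hbl, trav_cons, List.toFinset_cons]
    have h1 : s(x, y) ∉ (trav (y :: h)).toFinset := by
      rw [Sym2.eq_swap]; simpa using hb
    rw [Finset.card_insert_of_notMem h1]
    refine ⟨Finset.insert_subset (mem_edg hxy.symm) ih.1, ?_⟩
    have := ih.2
    simp only [List.length_cons] at this ⊢
    omega
  | red x y h _ hxy hr ih =>
    rw [redList, if_neg hr, trav_cons, List.toFinset_cons]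
    refine ⟨Finset.insert_subset (mem_edg hxy.symm) ih.1, ?_⟩
    have h1 := ih.2
    have h2 := Finset.card_le_card (Finset.subset_insert s(x, y) (trav (y :: h)).toFinset)
    simp only [List.length_cons] at h1 ⊢
    omega

theorem mem_of_trav {h : List V} {a b : V} (hab : s(a, b) ∈ trav h) : a ∈ h := by
  rw [trav, List.mem_map] at hab
  obtain ⟨⟨p, q⟩, hp, he⟩ := hab
  have h1 := List.of_mem_zip hp
  rw [Sym2.eq_iff] at he
  rcases he with ⟨rfl, rfl⟩ | ⟨rfl, rfl⟩
  · exact h1.1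
  · exact List.mem_of_mem_tail h1.2

/-- A family hits every even blue component of `v`. -/
def FamProp (G : SimpleGraph V) (v : V) (F : Finset (Finset V)) : Prop :=
  ∀ B : V → V → Prop, (∀ a b, B a b → B b a) → (∀ a b, B a b → G.Adj a b) →
    (∀ a, Even (Finset.univ.filter (fun b => B a b)).card) → (∀ b, G.Adj v b → B v b) →
    ∃ Z ∈ F, ∀ z ∈ Z, Relation.ReflTransGen B v z

theorem fam_avoid {G : SimpleGraph V} (heven : ∀ x, Even (dg G x)) (hd : ∀ x, 0 < dg G x)
    {u v : V} {F : Finset (Finset V)} (hF : FamProp G v F) {h : List V} (hh : Hist G u h) :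
    v ∉ h → redList G h ≠ [] → ∃ Z ∈ F, ∀ r ∈ redList G h, r ∉ Z := by
  induction hh with
  | base => simp [redList]
  | blue x y h _ hxy hb ih =>
    have hbl : isBlue G (y :: h) := ⟨x, hxy, hb⟩
    rw [redList, if_pos hbl]
    intro hv
    exact ih (fun h1 => hv (List.mem_cons_of_mem _ h1))
  | red x y h hh hxy hr ih =>
    intro hv _
    have hv' : v ∉ y :: h := fun h1 => hv (List.mem_cons_of_mem _ h1)
    have hfull := redList_full (Hist.red x y h hh hxy hr)
    obtain ⟨Z, hZ, hZc⟩ := hF (fun a b => G.Adj a b ∧ s(a, b) ∉ trav (y :: h))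
      (fun a b hab => ⟨hab.1.symm, by rw [Sym2.eq_swap]; exact hab.2⟩) (fun a b hab => hab.1)
      (fun a => by have h5 := (red_rho heven hh hr).2 a; rw [bnb] at h5; convert h5)
      (fun b hb => ⟨hb, fun h1 => hv' (mem_of_trav h1)⟩)
    refine ⟨Z, hZ, fun r hr' hrZ => ?_⟩
    have hno : ∀ w, ¬ (G.Adj r w ∧ s(r, w) ∉ trav (y :: h)) := by
      rintro w ⟨h1, h2⟩
      have h3 := hfull r hr' w h1
      rw [trav_cons] at h3
      rcases List.mem_cons.1 h3 with h4 | h4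
      · rw [h4] at h2; exact h2 (red_edge hxy hr)
      · exact h2 h4
    have hc := hZc r hrZ
    rcases Relation.ReflTransGen.cases_tail hc with h1 | ⟨w, _, h1⟩
    · subst h1
      obtain ⟨b, hb⟩ := Finset.card_pos.1 (hd r)
      exact hno b ⟨mem_nb.1 hb, fun h1 => hv' (mem_of_trav h1)⟩
    · exact hno w ⟨h1.1.symm, by rw [Sym2.eq_swap]; exact h1.2⟩

/-- Supermartingale. -/
noncomputable def Phi (G : SimpleGraph V) (u : V) (Z : Finset V) (K : ℕ) (h : List V) : ℝ :=
  if ∀ r ∈ redList G h, r ∉ Z then psi G Z (K - (redList G h).length) (rho G u h) else 0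

theorem Phi_nonneg (G : SimpleGraph V) (u : V) (Z : Finset V) (K : ℕ) (h : List V) :
    0 ≤ Phi G u Z K h := by
  rw [Phi]; split_ifs
  · exact psi_nonneg _ _ _ _
  · exact le_rfl

theorem Phi_step {G : SimpleGraph V} (heven : ∀ x, Even (dg G x))
    (A : List V → V) (u : V) (Z : Finset V) (K : ℕ) (y : V) (h : List V)
    (hh : Hist G u (y :: h)) :
    ∑ x, eStep G A (y :: h) x * Phi G u Z K (x :: y :: h) ≤ Phi G u Z K (y :: h) := by
  by_cases hb : isBlue G (y :: h)
  · have hb' : ∃ z : V, G.Adj y z ∧ s(y, z) ∉ trav (y :: h) := hb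
    have h1 : ∀ x, Phi G u Z K (x :: y :: h) = Phi G u Z K (y :: h) := by
      intro x
      rw [Phi, redList, rho, if_pos hb, if_pos hb]
      rfl
    simp only [h1, eStep, if_pos hb']
    simp
  · have hb' : ¬ ∃ z : V, G.Adj y z ∧ s(y, z) ∉ trav (y :: h) := hb
    have hrho := (red_rho heven hh hb).1
    by_cases hz : ∀ r ∈ redList G (y :: h), r ∉ Z
    · by_cases hy : y ∈ Z
      · have h1 : ∀ x, Phi G u Z K (x :: y :: h) = 0 := by
          intro x
          rw [Phi, redList, if_neg hb, if_neg]
          intro h2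
          exact h2 y (by simp) hy
        simp only [h1, mul_zero, Finset.sum_const_zero]
        exact Phi_nonneg _ _ _ _ _
      · have h1 : ∀ x, Phi G u Z K (x :: y :: h) =
            psi G Z (K - ((redList G (y :: h)).length + 1)) x := by
          intro x
          rw [Phi, redList, if_neg hb, if_pos, rho, if_neg hb]
          · simp
          · intro r hr
            rcases List.mem_cons.1 hr with h2 | h2
            · rw [h2]; exact hy
            · exact hz r h2
        have h2 : ∑ x, eStep G A (y :: h) x * Phi G u Z K (x :: y :: h) =
            (∑ x ∈ nb G y, psi G Z (K - ((redList G (y :: h)).length + 1)) x) / dg G y := by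
          rw [Finset.sum_div, nb, Finset.sum_filter]
          refine Finset.sum_congr rfl fun x _ => ?_
          rw [h1, eStep, if_neg hb', ncard_eq_dg]
          split_ifs
          · ring
          · ring
        rw [h2, Phi, if_pos hz, hrho]
        by_cases hK : (redList G (y :: h)).length < K
        · have h3 : K - (redList G (y :: h)).length =
            K - ((redList G (y :: h)).length + 1) + 1 := by omega
          rw [h3, psi, if_neg hy]
        · have h3 : K - (redList G (y :: h)).length = 0 := by omega
          have h4 : K - ((redList G (y :: h)).length + 1) = 0 := by omega
          rw [h3, h4]
          simp only [psi]
          apply div_le_one_of_le₀ _ (by positivity)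
          simp [dg]
    · have h1 : ∀ x, Phi G u Z K (x :: y :: h) = 0 := by
        intro x
        rw [Phi, redList, if_neg hb, if_neg]
        intro h2
        exact hz fun r hr => h2 r (List.mem_cons_of_mem _ hr)
      simp only [h1, mul_zero, Finset.sum_const_zero]
      exact Phi_nonneg _ _ _ _ _

theorem sum_cons (t : ℕ) (F : List V → ℝ) :
    ∑ f : Fin (t + 1) → V, F (List.ofFn f) =
      ∑ f : Fin t → V, ∑ x : V, F (x :: List.ofFn f) := by
  rw [← (Fin.consEquiv (fun _ : Fin (t + 1) => V)).sum_comp, Fintype.sum_prod_type,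
    Finset.sum_comm]
  refine Finset.sum_congr rfl fun f _ => Finset.sum_congr rfl fun x _ => ?_
  congr 1
  simp [Fin.consEquiv, List.ofFn_succ]

theorem Phi_sum {G : SimpleGraph V} (heven : ∀ x, Even (dg G x))
    {A : List V → V} (hA : ValidRule G A) (u : V) (Z : Finset V) (K t : ℕ) :
    ∑ f : Fin (t + 1) → V, trajProb G A u (List.ofFn f) * Phi G u Z K (List.ofFn f) ≤
      psi G Z K u := by
  induction t with
  | zero =>
    rw [sum_cons 0 (fun l => trajProb G A u l * Phi G u Z K l)]
    simp [trajProb, Phi, redList, rho]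
  | succ t ih =>
    refine le_trans ?_ ih
    rw [sum_cons (t + 1) (fun l => trajProb G A u l * Phi G u Z K l)]
    refine Finset.sum_le_sum fun f _ => ?_
    obtain ⟨y, h, hyh⟩ : ∃ y h, List.ofFn f = y :: h := ⟨_, _, List.ofFn_succ⟩
    rw [hyh]
    simp only [trajProb]
    by_cases h0 : trajProb G A u (y :: h) = 0
    · simp [h0]
    · have h1 := Phi_step heven A u Z K y h (hist_of_traj hA u _ h0)
      calc _ = trajProb G A u (y :: h) *
            ∑ x, eStep G A (y :: h) x * Phi G u Z K (x :: y :: h) := by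
            rw [Finset.mul_sum]
            exact Finset.sum_congr rfl fun x _ => by ring
        _ ≤ _ := mul_le_mul_of_nonneg_left h1 (traj_nonneg _ _ _ _)

theorem traj_sum_le_one {G : SimpleGraph V} (heven : ∀ x, Even (dg G x))
    {A : List V → V} (hA : ValidRule G A) (u : V) (t : ℕ) :
    ∑ f : Fin (t + 1) → V, trajProb G A u (List.ofFn f) ≤ 1 := by
  have h := Phi_sum heven hA u ∅ 0 t
  simpa [Phi, psi] using h

theorem uncov_le_one {G : SimpleGraph V} (heven : ∀ x, Even (dg G x))
    {A : List V → V} (hA : ValidRule G A) (u : V) (t : ℕ) : uncovProb G A u t ≤ 1 := by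
  refine le_trans ?_ (traj_sum_le_one heven hA u t)
  refine Finset.sum_le_sum fun f _ => ?_
  split_ifs
  · exact traj_nonneg _ _ _ _
  · exact le_rfl

set_option maxHeartbeats 2000000 in
theorem uncov_bound {G : SimpleGraph V} (heven : ∀ x, Even (dg G x)) (hd : ∀ x, 0 < dg G x)
    {Δ : ℕ} (hΔ : ∀ x, dg G x ≤ Δ)
    {A : List V → V} (hA : ValidRule G A) (u : V) (F : V → Finset (Finset V))
    (hF : ∀ v, FamProp G v (F v)) (M k : ℕ) (b : ℝ) (hM : ∀ v, (F v).card ≤ M) (hb0 : 0 ≤ b)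
    (hb : ∀ v, ∀ Z ∈ F v, psi G Z (k + 1) u ≤ b) :
    uncovProb G A u (Δ * Fintype.card V + 1 + k) ≤ Fintype.card V * (M * b) := by
  obtain ⟨t, ht⟩ : ∃ t, t = Δ * Fintype.card V + 1 + k := ⟨_, rfl⟩
  rw [← ht]
  have hterm : ∀ f : Fin (t + 1) → V,
      (0 ≤ ∑ v, ∑ Z ∈ F v, trajProb G A u (List.ofFn f) * Phi G u Z (k + 1) (List.ofFn f)) ∧
      ((¬ ∀ x : V, ∃ i, f i = x) → trajProb G A u (List.ofFn f) ≤
      ∑ v, ∑ Z ∈ F v, trajProb G A u (List.ofFn f) * Phi G u Z (k + 1) (List.ofFn f)) := by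
    intro f
    have hnn : ∀ v, ∀ Z ∈ F v,
        0 ≤ trajProb G A u (List.ofFn f) * Phi G u Z (k + 1) (List.ofFn f) :=
      fun v Z _ => mul_nonneg (traj_nonneg _ _ _ _) (Phi_nonneg _ _ _ _ _)
    have hnn2 : ∀ v ∈ Finset.univ,
        0 ≤ ∑ Z ∈ F v, trajProb G A u (List.ofFn f) * Phi G u Z (k + 1) (List.ofFn f) :=
      fun v _ => Finset.sum_nonneg (hnn v)
    refine ⟨Finset.sum_nonneg hnn2, fun hs => ?_⟩
    · by_cases h0 : trajProb G A u (List.ofFn f) = 0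
      · rw [h0]; simp
      · have hh := hist_of_traj hA u _ h0
        push Not at hs
        obtain ⟨v, hv⟩ := hs
        have hv' : v ∉ List.ofFn f := by
          rw [List.mem_ofFn]
          rintro ⟨i, hi⟩
          exact hv i hi
        obtain ⟨e1, e2⟩ := hist_len hh
        have e3 := (Finset.card_le_card e1).trans (edg_card hΔ)
        have e4 : (List.ofFn f).length = t + 1 := List.length_ofFn
        have e5 : k + 1 ≤ (redList G (List.ofFn f)).length := by omega
        obtain ⟨Z, hZ, hZa⟩ := fam_avoid heven hd (hF v) hh hv'
          (by intro h1; rw [h1] at e5; simp at e5)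
        have e6 : Phi G u Z (k + 1) (List.ofFn f) = 1 := by
          rw [Phi, if_pos hZa]
          have : k + 1 - (redList G (List.ofFn f)).length = 0 := by omega
          rw [this, psi]
        calc trajProb G A u (List.ofFn f)
            = trajProb G A u (List.ofFn f) * Phi G u Z (k + 1) (List.ofFn f) := by rw [e6, mul_one]
          _ ≤ ∑ Z ∈ F v, trajProb G A u (List.ofFn f) * Phi G u Z (k + 1) (List.ofFn f) :=
            Finset.single_le_sum
              (f := fun Z => trajProb G A u (List.ofFn f) * Phi G u Z (k + 1) (List.ofFn f))
              (hnn v) hZ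
          _ ≤ _ := Finset.single_le_sum (f := fun v => ∑ Z ∈ F v,
              trajProb G A u (List.ofFn f) * Phi G u Z (k + 1) (List.ofFn f)) hnn2
              (Finset.mem_univ v)
  rw [uncovProb]
  have hall : ∑ f : Fin (t + 1) → V,
      (if ∀ x : V, ∃ i, f i = x then 0 else trajProb G A u (List.ofFn f)) ≤
      ∑ f : Fin (t + 1) → V, ∑ v, ∑ Z ∈ F v,
        trajProb G A u (List.ofFn f) * Phi G u Z (k + 1) (List.ofFn f) := by
    refine Finset.sum_le_sum fun f _ => ?_
    by_cases hs : ∀ x : V, ∃ i, f i = x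
    · rw [if_pos hs]; exact (hterm f).1
    · rw [if_neg hs]; exact (hterm f).2 hs
  refine le_trans (le_of_eq ?_) (hall.trans ?_)
  · refine Finset.sum_congr rfl fun f _ => ?_
    by_cases hs : ∀ x : V, ∃ i, f i = x
    · rw [if_pos hs, if_pos hs]
    · rw [if_neg hs, if_neg hs]
  rw [Finset.sum_comm]
  calc _ ≤ ∑ _v : V, ((M : ℝ) * b) := by
        refine Finset.sum_le_sum fun v _ => ?_
        rw [Finset.sum_comm]
        calc _ ≤ ∑ Z ∈ F v, b := by
              refine Finset.sum_le_sum fun Z hZ => ?_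
              exact (Phi_sum heven hA u Z (k + 1) t).trans (hb v Z hZ)
          _ = (F v).card * b := by simp
          _ ≤ _ := mul_le_mul_of_nonneg_right (by exact_mod_cast hM v) hb0
    _ = _ := by simp

end Hist

section Fam
variable {V : Type} [Fintype V] [DecidableEq V]

/-- An even edge set containing all edges at `v`. -/
structure NiceB (G : SimpleGraph V) (v : V) (B : V → V → Prop) : Prop where
  symm : ∀ a b, B a b → B b a
  adj : ∀ a b, B a b → G.Adj a b
  even : ∀ a, Even (Finset.univ.filter (fun b => B a b)).card
  full : ∀ b, G.Adj v b → B v b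

/-- One exploration step. -/
def stepD (G : SimpleGraph V) (D : Finset (V × V)) (a b : V) : Prop :=
  G.Adj a b ∧ (dg G a = 2 ∨ (a, b) ∈ D)

/-- The explored set. -/
noncomputable def ZD (G : SimpleGraph V) (v : V) (D : Finset (V × V)) : Finset V :=
  Finset.univ.filter (fun z => Relation.ReflTransGen (stepD G D) v z)

theorem mem_ZD {G : SimpleGraph V} {v : V} {D : Finset (V × V)} {z : V} :
    z ∈ ZD G v D ↔ Relation.ReflTransGen (stepD G D) v z := by
  simp [ZD]

theorem ZD_mono {G : SimpleGraph V} {v : V} {D D' : Finset (V × V)} (h : D ⊆ D') :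
    ZD G v D ⊆ ZD G v D' := by
  intro z hz
  rw [mem_ZD] at hz ⊢
  exact Relation.ReflTransGen.mono (fun a b hab => ⟨hab.1, hab.2.imp id fun h1 => h h1⟩) _ _ hz

/-- Unexplored branching vertices. -/
noncomputable def front (G : SimpleGraph V) (v : V) (S : Finset V × Finset (V × V)) : Finset V :=
  (ZD G v S.2).filter (fun w => dg G w ≠ 2 ∧ w ∉ S.1)

theorem nice_has {G : SimpleGraph V} (hd : ∀ x, 0 < dg G x) {v : V} {B : V → V → Prop}
    (hB : NiceB G v B) {a : V} (ha : Relation.ReflTransGen B v a) : ∃ b, B a b := by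
  rcases Relation.ReflTransGen.cases_tail ha with h1 | ⟨w, _, h1⟩
  · subst h1
    obtain ⟨b, hb⟩ := Finset.card_pos.1 (hd a)
    exact ⟨b, hB.full b (mem_nb.1 hb)⟩
  · exact ⟨w, hB.symm _ _ h1⟩

theorem nice_two {G : SimpleGraph V} (hd : ∀ x, 0 < dg G x) {v : V} {B : V → V → Prop}
    (hB : NiceB G v B) {a : V} (ha : Relation.ReflTransGen B v a) (h2 : dg G a = 2) {b : V}
    (hab : G.Adj a b) : B a b := by
  obtain ⟨c, hc⟩ := nice_has hd hB ha
  have h1 : Finset.univ.filter (fun b => B a b) ⊆ nb G a := by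
    intro w hw
    exact mem_nb.2 (hB.adj _ _ (by simpa using hw))
  have h3 : 0 < (Finset.univ.filter (fun b => B a b)).card :=
    Finset.card_pos.2 ⟨c, by simpa using hc⟩
  have h4 := hB.even a
  have h5 : (nb G a).card ≤ (Finset.univ.filter (fun b => B a b)).card := by
    change dg G a ≤ _
    rw [h2]
    obtain ⟨r, hr⟩ := h4
    omega
  have h6 := Finset.eq_of_subset_of_card_le h1 h5
  have h7 := mem_nb.2 hab
  rw [← h6] at h7
  simpa using h7

theorem ZD_sub {G : SimpleGraph V} (hd : ∀ x, 0 < dg G x) {v : V} {B : V → V → Prop}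
    (hB : NiceB G v B) {D : Finset (V × V)} (hD : ∀ a b, (a, b) ∈ D → B a b) {z : V}
    (hz : z ∈ ZD G v D) : Relation.ReflTransGen B v z := by
  rw [mem_ZD] at hz
  induction hz with
  | refl => exact .refl
  | tail _ h2 ih =>
    refine ih.tail ?_
    rcases h2.2 with h3 | h3
    · exact nice_two hd hB ih h3 h2.1
    · exact hD _ _ h3

theorem ZD_sup {G : SimpleGraph V} {v : V} {B : V → V → Prop}
    (hB : NiceB G v B) {S : Finset V × Finset (V × V)}
    (hD : ∀ a b, a ∈ S.1 → B a b → (a, b) ∈ S.2) (hf : front G v S = ∅) {z : V}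
    (hz : Relation.ReflTransGen B v z) : z ∈ ZD G v S.2 := by
  induction hz with
  | refl => exact mem_ZD.2 .refl
  | @tail b c _ h2 ih =>
    have h3 : b ∉ front G v S := by rw [hf]; simp
    have h4 : dg G b = 2 ∨ b ∈ S.1 := by
      by_contra hcon
      push Not at hcon
      exact h3 (Finset.mem_filter.2 ⟨ih, hcon⟩)
    rw [mem_ZD] at ih ⊢
    exact ih.tail ⟨hB.adj _ _ h2, h4.imp id fun h5 => hD _ _ h5 h2⟩

theorem comp_card {G : SimpleGraph V} {ℓ : ℕ} (hgood : EvenSubgraphGood G ℓ) {v : V}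
    {B : V → V → Prop} (hB : NiceB G v B) :
    ℓ ≤ (Finset.univ.filter (fun z => Relation.ReflTransGen B v z)).card := by
  let H : G.Subgraph :=
    { verts := {z | Relation.ReflTransGen B v z}
      Adj := fun a b => B a b ∧ Relation.ReflTransGen B v a
      adj_sub := fun h => hB.adj _ _ h.1
      edge_vert := fun h => h.2
      symm := ⟨fun a b h => ⟨hB.symm _ _ h.1, h.2.tail h.1⟩⟩ }
  have h1 := hgood v H ⟨v, Relation.ReflTransGen.refl⟩ (by
    intro e he hv
    obtain ⟨w, rfl⟩ := hv
    exact ⟨hB.full w he, Relation.ReflTransGen.refl⟩) (by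
    intro x
    by_cases hx : Relation.ReflTransGen B v x
    · have h2 := hB.even x
      have h3 : H.neighborSet x = ↑(Finset.univ.filter (fun b => B x b)) := by
        ext b
        simp [H, SimpleGraph.Subgraph.neighborSet, hx]
      rw [h3, Set.ncard_coe_finset]
      exact h2
    · have h3 : H.neighborSet x = ∅ := by
        ext b
        simp [H, SimpleGraph.Subgraph.neighborSet, hx]
      rw [h3]; simp)
  refine h1.trans (le_of_eq ?_)
  rw [← Set.ncard_coe_finset]
  congr 1
  ext z
  simp [H]

/-- State consistent with `B`. -/
def OkS (G : SimpleGraph V) (v : V) (B : V → V → Prop) (S : Finset V × Finset (V × V)) : Prop :=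
  S.1 ⊆ ZD G v S.2 ∧ (∀ w ∈ S.1, 3 ≤ dg G w) ∧ ∀ a b, (a, b) ∈ S.2 ↔ a ∈ S.1 ∧ B a b

/-- Extend a state at vertex `w` with chosen neighbours `A`. -/
noncomputable def extS (S : Finset V × Finset (V × V)) (w : V) (A : Finset V) :
    Finset V × Finset (V × V) := (insert w S.1, S.2 ∪ A.image (fun b => (w, b)))

/-- All extensions of a state. -/
noncomputable def cand (G : SimpleGraph V) (v : V) (S : Finset V × Finset (V × V)) :
    Finset (Finset V × Finset (V × V)) :=
  if h : (front G v S).Nonempty then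
    (nb G h.choose).powerset.image (fun A => extS S h.choose A) else {S}

theorem cand_card {G : SimpleGraph V} {Δ : ℕ} (hΔ : ∀ x, dg G x ≤ Δ) (v : V)
    (S : Finset V × Finset (V × V)) : (cand G v S).card ≤ 2 ^ Δ := by
  rw [cand]
  split_ifs with h
  · refine Finset.card_image_le.trans ?_
    rw [Finset.card_powerset]
    exact Nat.pow_le_pow_right (by norm_num) (hΔ _)
  · simpa using Nat.one_le_two_pow

theorem fam_ind {G : SimpleGraph V} (heven : ∀ x, Even (dg G x)) (hd : ∀ x, 0 < dg G x)
    {Δ : ℕ} (hΔ : ∀ x, dg G x ≤ Δ) (v : V) (k : ℕ) :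
    ∃ F : Finset (Finset V × Finset (V × V)), F.card ≤ 2 ^ (Δ * k) ∧
      ∀ B, NiceB G v B → ∃ S ∈ F, OkS G v B S ∧ (S.1.card = k ∨ front G v S = ∅) := by
  induction k with
  | zero =>
    refine ⟨{(∅, ∅)}, by simp, fun B hB => ⟨(∅, ∅), by simp, ⟨by simp, by simp, by simp⟩, by simp⟩⟩
  | succ k ih =>
    obtain ⟨F, hF, hF2⟩ := ih
    refine ⟨F.biUnion (cand G v), ?_, ?_⟩
    · refine (Finset.card_biUnion_le_card_mul F _ (2 ^ Δ) fun S _ => cand_card hΔ v S).trans ?_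
      rw [Nat.mul_succ, pow_add]
      exact Nat.mul_le_mul_right _ hF
    · intro B hB
      obtain ⟨S, hS, hok, hor⟩ := hF2 B hB
      by_cases hf : (front G v S).Nonempty
      · have hk : S.1.card = k := by
          rcases hor with h | h
          · exact h
          · rw [h] at hf; simp at hf
        have hw := hf.choose_spec
        have hcand : cand G v S =
            (nb G hf.choose).powerset.image (fun A => extS S hf.choose A) := by
          rw [cand, dif_pos hf]
        generalize hf.choose = w at hw hcand
        rw [front, Finset.mem_filter] at hw
        obtain ⟨hwZ, hw2, hwS⟩ := hw
        obtain ⟨o1, o2, o3⟩ := hok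
        have hsub : S.2 ⊆ (extS S w (Finset.univ.filter (fun b => B w b))).2 :=
          Finset.subset_union_left
        refine ⟨extS S w (Finset.univ.filter (fun b => B w b)), ?_, ⟨?_, ?_, ?_⟩, Or.inl ?_⟩
        · rw [Finset.mem_biUnion]
          refine ⟨S, hS, ?_⟩
          rw [hcand]
          refine Finset.mem_image_of_mem _ (Finset.mem_powerset.2 fun b hb => ?_)
          exact mem_nb.2 (hB.adj _ _ (by simpa using hb))
        · refine Finset.insert_subset (ZD_mono hsub hwZ) (o1.trans (ZD_mono hsub))
        · intro x hx
          rcases Finset.mem_insert.1 hx with rfl | h1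
          · have h3 := hd x
            obtain ⟨r, hr⟩ := heven x
            omega
          · exact o2 x h1
        · intro a b
          simp only [extS, Finset.mem_union, Finset.mem_image, Finset.mem_filter, Finset.mem_univ,
            true_and, Prod.mk.injEq, Finset.mem_insert, o3]
          constructor
          · rintro (⟨h1, h2⟩ | ⟨c, h1, rfl, rfl⟩)
            · exact ⟨Or.inr h1, h2⟩
            · exact ⟨Or.inl rfl, h1⟩
          · rintro ⟨rfl | h1, h2⟩
            · exact Or.inr ⟨b, h2, rfl, rfl⟩
            · exact Or.inl ⟨h1, h2⟩
        · rw [extS, Finset.card_insert_of_notMem hwS, hk]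
      · refine ⟨S, ?_, hok, Or.inr (Finset.not_nonempty_iff_eq_empty.1 hf)⟩
        rw [Finset.mem_biUnion]
        refine ⟨S, hS, ?_⟩
        rw [cand, dif_neg hf]
        simp

theorem fam_exists {G : SimpleGraph V} {ℓ : ℕ} (heven : ∀ x, Even (dg G x))
    (hd : ∀ x, 0 < dg G x) {Δ : ℕ} (hΔ : ∀ x, dg G x ≤ Δ) (hgood : EvenSubgraphGood G ℓ)
    (j : ℕ) (v : V) :
    ∃ F : Finset (Finset V), F.card ≤ 2 ^ (Δ * j) ∧ (∀ Z ∈ F, GoodZ G ℓ j Z) ∧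
      FamProp G v F := by
  obtain ⟨F, hF, hF2⟩ := fam_ind heven hd hΔ v j
  refine ⟨(F.image (fun S => ZD G v S.2)).filter (fun Z => GoodZ G ℓ j Z), ?_, ?_, ?_⟩
  · exact ((Finset.card_filter_le _ _).trans Finset.card_image_le).trans hF
  · intro Z hZ
    exact (Finset.mem_filter.1 hZ).2
  · intro B b1 b2 b3 b4
    have hB : NiceB G v B := ⟨b1, b2, fun a => by convert b3 a, b4⟩
    obtain ⟨S, hS, ⟨o1, o2, o3⟩, hor⟩ := hF2 B hB
    refine ⟨ZD G v S.2, ?_, fun z hz => ZD_sub hd hB (fun a b h => ((o3 a b).1 h).2) hz⟩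
    rw [Finset.mem_filter]
    refine ⟨Finset.mem_image_of_mem (fun S : Finset V × Finset (V × V) => ZD G v S.2) hS, ?_⟩
    rcases hor with h | h
    · right
      rw [← h]
      apply Finset.card_le_card
      intro w hw
      exact Finset.mem_filter.2 ⟨o1 hw, o2 w hw⟩
    · left
      refine (comp_card hgood hB).trans (Finset.card_le_card ?_)
      intro z hz
      exact ZD_sup hB (fun a b h1 h2 => (o3 a b).2 ⟨h1, h2⟩) h (by simpa using hz)

end Fam

section Final
variable {V : Type} [Fintype V] [DecidableEq V]

theorem tsum_geo_bound (f : ℕ → ℝ) (N : ℕ) (r : ℝ) (hr0 : 0 ≤ r) (hr1 : r < 1)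
    (h1 : ∀ t, f t ≤ 1) (h2 : ∀ k, f (N + k) ≤ r ^ k) :
    ∑' t, ENNReal.ofReal (f t) ≤ ENNReal.ofReal (N + 1 / (1 - r)) := by
  rw [← Summable.sum_add_tsum_nat_add' (f := fun t => ENNReal.ofReal (f t)) (k := N)
    ENNReal.summable, ENNReal.ofReal_add (by positivity) (by
      apply div_nonneg zero_le_one; linarith)]
  apply add_le_add
  · calc ∑ i ∈ Finset.range N, ENNReal.ofReal (f i) ≤ ∑ i ∈ Finset.range N, 1 := by
          refine Finset.sum_le_sum fun i _ => ?_
          rw [ENNReal.ofReal_le_one]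
          exact h1 i
      _ = _ := by simp
  · calc ∑' i, ENNReal.ofReal (f (i + N)) ≤ ∑' i, ENNReal.ofReal (r ^ i) := by
          refine ENNReal.tsum_le_tsum fun i => ENNReal.ofReal_le_ofReal ?_
          rw [add_comm]
          exact h2 i
      _ = ENNReal.ofReal (∑' i, r ^ i) :=
          (ENNReal.ofReal_tsum_of_nonneg (fun i => pow_nonneg hr0 i)
            (summable_geometric_of_lt_one hr0 hr1)).symm
      _ ≤ _ := by
          rw [tsum_geometric_of_lt_one hr0 hr1, one_div]

/-- The final constant. -/
noncomputable def Bc (Δ : ℕ) : ℝ := (Δ + 2) + (2 + 3 * Δ + 1) * (2 * K3 Δ)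

theorem num_bound (n L γ : ℝ) (Δ j : ℕ) (hn : 0 < n) (hL : L = Real.log n) (hL1 : 1 ≤ L)
    (hj : (j : ℝ) ≤ 2 * L) (hγ0 : 0 < γ) (hγ1 : γ ≤ 1 / 2) (T : ℕ)
    (hT : (2 + 3 * Δ) * L / γ ≤ T) (k : ℕ) :
    n * ((2 ^ (Δ * j) : ℕ) * ((1 - γ) ^ (T + k) * (Δ * n))) ≤ (1 - γ) ^ k := by
  have e1 : n = Real.exp L := by rw [hL, Real.exp_log hn]
  have e2 : ((2 ^ (Δ * j) : ℕ) : ℝ) ≤ Real.exp (2 * Δ * L) := by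
    have h2 : (2 : ℝ) ≤ Real.exp 1 := by
      have := Real.add_one_le_exp (1 : ℝ); linarith
    calc ((2 ^ (Δ * j) : ℕ) : ℝ) = 2 ^ (Δ * j) := by push_cast; rfl
      _ ≤ Real.exp 1 ^ (Δ * j) := pow_le_pow_left₀ (by norm_num) h2 _
      _ = Real.exp ((Δ * j : ℕ) * 1) := by rw [Real.exp_nat_mul]
      _ ≤ _ := by
        apply Real.exp_le_exp.2
        push_cast
        have : (Δ : ℝ) * j ≤ Δ * (2 * L) := mul_le_mul_of_nonneg_left hj (by positivity)
        linarith
  have e3 : (Δ : ℝ) ≤ Real.exp (Δ * L) := by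
    have h3 := Real.add_one_le_exp ((Δ : ℝ) * L)
    have h4 : (Δ : ℝ) * 1 ≤ Δ * L := mul_le_mul_of_nonneg_left hL1 (by positivity)
    linarith
  have e4 : (1 - γ) ^ T ≤ Real.exp (-((2 + 3 * Δ) * L)) := by
    have h5 : 1 - γ ≤ Real.exp (-γ) := by
      have := Real.add_one_le_exp (-γ); linarith
    calc (1 - γ) ^ T ≤ Real.exp (-γ) ^ T := pow_le_pow_left₀ (by linarith) h5 _
      _ = Real.exp (T * (-γ)) := by rw [Real.exp_nat_mul]
      _ ≤ _ := by
        apply Real.exp_le_exp.2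
        rw [div_le_iff₀ hγ0] at hT
        linarith
  have hg : (0 : ℝ) ≤ 1 - γ := by linarith
  calc n * ((2 ^ (Δ * j) : ℕ) * ((1 - γ) ^ (T + k) * (Δ * n)))
      = (n * n) * (((2 ^ (Δ * j) : ℕ) * Δ) * (1 - γ) ^ T) * (1 - γ) ^ k := by
        rw [pow_add]; ring
    _ ≤ (Real.exp L * Real.exp L) * ((Real.exp (2 * Δ * L) * Real.exp (Δ * L)) *
          Real.exp (-((2 + 3 * Δ) * L))) * (1 - γ) ^ k := by
        rw [e1]
        gcongr
    _ = (1 - γ) ^ k := by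
        rw [← Real.exp_add, ← Real.exp_add, ← Real.exp_add, ← Real.exp_add]
        have : L + L + (2 * Δ * L + Δ * L + -((2 + 3 * Δ) * L)) = 0 := by ring
        rw [this]; simp

theorem main_bound {G : SimpleGraph V} {ℓ Δ : ℕ} (hc : G.Connected) (hd : ∀ x, 0 < dg G x)
    (hgood : EvenSubgraphGood G ℓ) (heven : ∀ x, Even (dg G x)) (hΔ : ∀ x, dg G x ≤ Δ)
    (hℓ : 0 < ℓ) {A : List V → V} (hA : ValidRule G A) (u : V) :
    ecoverTime G A u ≤
            ENNReal.ofReal (Bc Δ * ((Fintype.card V : ℝ) +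
              (Fintype.card V : ℝ) * Real.log (Fintype.card V) /
                ((ℓ : ℝ) * (1 - lambdaMax (lazyMatrix G))))) := by
  have hcard : 3 ≤ Fintype.card V := by
    have h1 := hd u
    obtain ⟨r, hr⟩ := heven u
    have h2 : (insert u (nb G u)).card ≤ Fintype.card V := Finset.card_le_univ _
    rw [Finset.card_insert_of_notMem (by rw [mem_nb]; exact G.irrefl)] at h2
    change dg G u + 1 ≤ _ at h2
    omega
  obtain ⟨g0, g1⟩ := gam_facts (Δ := Δ) hc hd hgood heven hℓ
  obtain ⟨l0, l1, _⟩ := lam_facts hd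
  have hn3 : (3 : ℝ) ≤ Fintype.card V := by exact_mod_cast hcard
  have hL : 1 ≤ Real.log (Fintype.card V) := by
    rw [Real.le_log_iff_exp_le (by linarith)]
    have := Real.exp_one_lt_d9
    linarith
  set L := Real.log (Fintype.card V) with hLd
  set γ := gam G ℓ Δ with hγ
  have hj1 : L ≤ (⌈L⌉₊ : ℝ) := Nat.le_ceil _
  have hj2 : (⌈L⌉₊ : ℝ) ≤ 2 * L := by
    have := Nat.ceil_lt_add_one (a := L) (by linarith)
    linarith
  have hT1 := Nat.le_ceil ((2 + 3 * Δ) * L / γ)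
  have hT2 := Nat.ceil_lt_add_one (a := (2 + 3 * Δ) * L / γ) (by positivity)
  generalize ⌈L⌉₊ = j at hj1 hj2
  generalize ⌈(2 + 3 * Δ) * L / γ⌉₊ = T at hT1 hT2
  choose F hF1 hF2 hF3 using fam_exists heven hd hΔ hgood j
  have hsum := tsum_geo_bound (fun t => uncovProb G A u t) (Δ * Fintype.card V + 1 + T) (1 - γ)
    (by linarith) (by linarith) (fun t => uncov_le_one heven hA u t) (by
      intro k
      have h1 := uncov_bound heven hd hΔ hA u F hF3 (2 ^ (Δ * j)) (T + k)
        ((1 - γ) ^ (T + k) * (Δ * Fintype.card V)) hF1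
        (mul_nonneg (pow_nonneg (by linarith) _) (by positivity))
        (fun v Z hZ => psi_bound hc hd hgood heven hΔ hℓ hL hj1 Z (hF2 v Z hZ) (T + k) u)
      rw [add_assoc]
      exact h1.trans (num_bound _ L γ Δ j (by linarith) hLd hL hj2 g0 g1 T hT1 k))
  refine hsum.trans (ENNReal.ofReal_le_ofReal ?_)
  have hℓ0 : (0 : ℝ) < ℓ := by exact_mod_cast hℓ
  have hK := K3_ge Δ
  have hinv : 1 / γ = 2 * K3 Δ * (Fintype.card V / (ℓ * (1 - lambdaMax (lazyMatrix G)))) := by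
    have h1 : 1 - lambdaMax (lazyMatrix G) ≠ 0 := by linarith
    rw [hγ, gam]
    field_simp
  push_cast
  have hq0 : 0 ≤ (Fintype.card V : ℝ) / (ℓ * (1 - lambdaMax (lazyMatrix G))) :=
    div_nonneg (by linarith) (mul_nonneg hℓ0.le (by linarith))
  rw [mul_div_right_comm, sub_sub_cancel]
  have hT3 : (2 + 3 * (Δ : ℝ)) * L / γ = (2 + 3 * Δ) * L * (1 / γ) := by ring
  rw [hT3] at hT2
  generalize (Fintype.card V : ℝ) / (ℓ * (1 - lambdaMax (lazyMatrix G))) = q at hinv hq0 ⊢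
  rw [hinv] at hT2 ⊢
  generalize (Fintype.card V : ℝ) = n at hn3 ⊢
  have hp1 : 2 * K3 Δ * q * 1 ≤ 2 * K3 Δ * q * L :=
    mul_le_mul_of_nonneg_left hL (by positivity)
  have hp2 : 0 ≤ (Δ + 2 : ℝ) * (q * L) := by positivity
  have hp3 : 0 ≤ (2 + 3 * (Δ : ℝ) + 1) * (2 * K3 Δ) * n := by positivity
  have hp4 : Bc Δ * (n + q * L) = (Δ + 2) * n + (Δ + 2 : ℝ) * (q * L) +
      (2 + 3 * (Δ : ℝ) + 1) * (2 * K3 Δ) * n + (2 + 3 * Δ) * L * (2 * K3 Δ * q) +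
      2 * K3 Δ * q * L := by rw [Bc]; ring
  rw [hp4]
  linarith

end Final

/-- For every degree bound `Δ` there is a constant `B > 0` such that: for
every connected graph `G` on `n` vertices with all degrees even, maximum degree at most `Δ`,
which is `ℓ`-good, every valid rule `A` and every start vertex, the vertex cover time of the
E-process on `G` is at most `B·(n + n·log n/(ℓ·(1 − λmax)))`. -/
theorem stmt0 (Δ : ℕ) :
    ∃ B : ℝ, 0 < B ∧
      ∀ (V : Type) [Fintype V] [DecidableEq V] (G : SimpleGraph V) (ℓ : ℕ),
        G.Connected → (∀ x : V, (G.neighborSet x).ncard ≤ Δ) →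
        (∀ x : V, Even ((G.neighborSet x).ncard)) → 0 < ℓ → EvenSubgraphGood G ℓ →
        ∀ A : List V → V, ValidRule G A → ∀ u : V,
          ecoverTime G A u ≤
            ENNReal.ofReal (B * ((Fintype.card V : ℝ) +
              (Fintype.card V : ℝ) * Real.log (Fintype.card V) /
                ((ℓ : ℝ) * (1 - lambdaMax (lazyMatrix G))))) := by
  have hK := K3_ge Δ
  refine ⟨Bc Δ, by rw [Bc]; positivity, ?_⟩
  intro V _ _ G ℓ hc hΔ heven hℓ hgood A hA u
  simp only [ncard_eq_dg] at hΔ heven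
  rcases subsingleton_or_nontrivial V with hs | hs
  · have h0 : ecoverTime G A u = 0 := by
      rw [ecoverTime]
      simp only [ENNReal.tsum_eq_zero, ENNReal.ofReal_eq_zero]
      intro t
      rw [uncovProb]
      apply Finset.sum_nonpos
      intro f _
      rw [if_pos]
      intro x
      exact ⟨0, Subsingleton.elim _ _⟩
    rw [h0]
    exact zero_le
  · refine main_bound hc ?_ hgood heven hΔ hℓ hA u
    intro x
    obtain ⟨y, hy⟩ := hc.preconnected.exists_adj_of_nontrivial x
    exact Finset.card_pos.2 ⟨y, mem_nb.2 hy⟩
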